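/- arXiv:1112.5415 — 3 statements merged into one kernel-verified Lean document; each statement's English description precedes it below -/
import Mathlib

section
/- Suppose Φ is infinite, and define E₂° = ⋃ L(α, ρ̂) ∩ Q̂, the union over all α ∈ Δ and ρ ∈ Φ⁺ with ρ̂ ≠ α, where L(α,ρ̂) is the affine line through α and ρ̂. Then E₂° is dense in E(Φ). -/
open Filter Topology

noncomputable section

variable {ι V : Type*} [Fintype ι] [NormedAddCommGroup V] [NormedSpace ℝ V]

/-- The set of simple `B`-reflections: the linear automorphisms of `V` given by the
`B`-reflection formula `u ↦ u - 2 (B α u / B α α) • α` associated to a simple root `α ∈ Δ`. -/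
def simpleReflections (B : LinearMap.BilinForm ℝ V) (Δ : Module.Basis ι ℝ V) :
    Set (V ≃ₗ[ℝ] V) :=
  { e | ∃ i : ι, ∀ u : V, e u = u - (2 * B (Δ i) u / B (Δ i) (Δ i)) • Δ i }

/-- The geometric Coxeter group `W`: the subgroup of linear automorphisms of `V`
generated by the simple `B`-reflections. -/
def cox (B : LinearMap.BilinForm ℝ V) (Δ : Module.Basis ι ℝ V) : Subgroup (V ≃ₗ[ℝ] V) :=
  Subgroup.closure (simpleReflections B Δ)

/-- The root system `Φ = W ⬝ Δ`. -/
def Phi (B : LinearMap.BilinForm ℝ V) (Δ : Module.Basis ι ℝ V) : Set V :=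
  { ρ | ∃ w ∈ cox B Δ, ∃ i : ι, w (Δ i) = ρ }

/-- The positive roots `Φ⁺ = Φ ∩ cone(Δ)`. -/
def posPhi (B : LinearMap.BilinForm ℝ V) (Δ : Module.Basis ι ℝ V) : Set V :=
  { ρ ∈ Phi B Δ | ∀ i : ι, 0 ≤ Δ.repr ρ i }

/-- `|v|₁`: the sum of the coordinates of `v` in the basis `Δ`. -/
def l1 (Δ : Module.Basis ι ℝ V) (v : V) : ℝ := ∑ i : ι, Δ.repr v i

/-- The normalization map `v ↦ v̂ = v / |v|₁`. -/
def nrm (Δ : Module.Basis ι ℝ V) (v : V) : V := (l1 Δ v)⁻¹ • v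

/-- The set `Φ̂` of normalized roots. -/
def nPhi (B : LinearMap.BilinForm ℝ V) (Δ : Module.Basis ι ℝ V) : Set V :=
  nrm Δ '' posPhi B Δ

/-- `E(Φ)`: the set of accumulation points of the set of normalized roots. -/
def Eset (B : LinearMap.BilinForm ℝ V) (Δ : Module.Basis ι ℝ V) : Set V :=
  { x | AccPt x (𝓟 (nPhi B Δ)) }

/-- The isotropic cone `Q` of `B`. -/
def isoQ (B : LinearMap.BilinForm ℝ V) : Set V := { v | B v v = 0 }

/-- The affine line through two points `a` and `b`. -/
def lineThrough (a b : V) : Set V := { y : V | ∃ t : ℝ, y = a + t • (b - a) }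

/-- `E₂`: the union over all pairs of distinct positive roots `ρ₁, ρ₂` of
`L(ρ̂₁, ρ̂₂) ∩ Q̂`. -/
def E2 (B : LinearMap.BilinForm ℝ V) (Δ : Module.Basis ι ℝ V) : Set V :=
  { x : V | ∃ ρ₁ ∈ posPhi B Δ, ∃ ρ₂ ∈ posPhi B Δ, ρ₁ ≠ ρ₂ ∧
      x ∈ lineThrough (nrm Δ ρ₁) (nrm Δ ρ₂) ∧ B x x = 0 ∧ l1 Δ x = 1 }

/-- `E₂°`: the union over all `α ∈ Δ` and `ρ ∈ Φ⁺` with `ρ̂ ≠ α` of `L(α, ρ̂) ∩ Q̂`. -/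
def E2circ (B : LinearMap.BilinForm ℝ V) (Δ : Module.Basis ι ℝ V) : Set V :=
  { x : V | ∃ i : ι, ∃ ρ ∈ posPhi B Δ, nrm Δ ρ ≠ Δ i ∧
      x ∈ lineThrough (Δ i) (nrm Δ ρ) ∧ B x x = 0 ∧ l1 Δ x = 1 }

/-!
Let `x ∈ E(Φ)` be the limit of `ρ̂ₙ`, where the `ρₙ` are distinct positive roots. Since `Φ` is
discrete, `|ρₙ|₁ → ∞`, so that adding a bounded vector to `ρₙ` does not change the limit of the
normalizations.

If `B(α, x) ≠ 0` for some simple root `α`, then `|B(α, ρₙ)| → ∞`, and `ρₙ + tₙ α` is isotropic for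
some `tₙ ∈ [-1, 1]`. Its normalization lies on the line through `α` and `ρ̂ₙ`, and tends to `x`.

If `x` lies in the radical of `B`, then `B` is positive semidefinite on the span of the simple roots
in the support of `x`. There `B` takes only finitely many values on pairs of roots: a pair with
`|B(ρ, σ)| < 1` is conjugate to a pair in one of the finitely many finite standard parabolic
subsystems. By pigeonhole, infinitely many `ρₙ` differ from a fixed root `ρₘ = w α` by a radical
vector `d`. Then `α + d = w⁻¹ ρₙ` is a root, `d̂` is an isotropic point on the line through `α` and
its normalization, and `d̂` tends to `x`.
-/

section Chebyshev

open Polynomial Polynomial.Chebyshev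

theorem chebyshevS_two_mul_and_chebyshevS_two_mul_sub_one (R : Type*) [CommRing R] (m : ℤ) :
    S R (2 * m) = (S R m + S R (m - 1)).comp (X ^ 2 - 2) ∧
      S R (2 * m - 1) = X * (S R (m - 1)).comp (X ^ 2 - 2) := by
  induction m using Int.induction_on with
  | zero => simp
  | succ m ih =>
    have h_odd : S R (2 * (m + 1) - 1) = X * S R (2 * m) - S R (2 * m - 1) := by
      convert S_add_one R (2 * m) using 2; ring
    have h_even : S R (2 * (m + 1)) = X * S R (2 * (m + 1) - 1) - S R (2 * m) := by
      convert S_eq R (2 * (m + 1)) using 3; ring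
    rw [h_even, h_odd, ih.1, ih.2, S_add_one, add_sub_cancel_right]
    simp only [add_comp, sub_comp, mul_comp, X_comp]
    constructor <;> ring
  | pred m ih =>
    have h_even : S R (2 * (-m - 1)) = X * S R (2 * -m - 1) - S R (2 * -m) := by
      convert S_sub_two R (2 * -m) using 2; ring
    have h_odd : S R (2 * (-m - 1) - 1) = X * S R (2 * (-m - 1)) - S R (2 * -m - 1) := by
      rw [show 2 * (-(m : ℤ) - 1) - 1 = 2 * -m - 1 - 2 by ring, S_sub_two,
        show 2 * -(m : ℤ) - 1 - 1 = 2 * (-m - 1) by ring]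
    have h_half : S R (-m - 1 - 1) = X * S R (-m - 1) - S R (-m) := by
      convert S_sub_two R (-m) using 2; ring
    rw [h_odd, h_even, ih.1, ih.2, h_half]
    simp only [add_comp, sub_comp, mul_comp, X_comp]
    constructor <;> ring

theorem chebyshevS_two_mul_eval {R : Type*} [CommRing R] (c : R) (m : ℤ) :
    (S R (2 * m)).eval c = (S R m).eval (c ^ 2 - 2) + (S R (m - 1)).eval (c ^ 2 - 2) := by
  simpa using congrArg (Polynomial.eval c) (chebyshevS_two_mul_and_chebyshevS_two_mul_sub_one R m).1

theorem chebyshevS_two_mul_sub_one_eval {R : Type*} [CommRing R] (c : R) (m : ℤ) :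
    (S R (2 * m - 1)).eval c = c * (S R (m - 1)).eval (c ^ 2 - 2) := by
  simpa using congrArg (Polynomial.eval c) (chebyshevS_two_mul_and_chebyshevS_two_mul_sub_one R m).2

theorem chebyshevS_eval_mul_chebyshevS_sub_one_eval {R : Type*} [CommRing R] (c : R) (m : ℤ) :
    (S R m).eval c * (S R (m - 1)).eval c =
      c * ((S R ((m - 1) / 2)).eval (c ^ 2 - 2) *
        ((S R (m / 2)).eval (c ^ 2 - 2) + (S R ((m - 2) / 2)).eval (c ^ 2 - 2))) := by
  obtain ⟨j, rfl | rfl⟩ := m.even_or_odd'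
  · rw [show (2 * j - 1) / 2 = j - 1 by lia, show 2 * j / 2 = j by lia,
      show (2 * j - 2) / 2 = j - 1 by lia, chebyshevS_two_mul_eval, chebyshevS_two_mul_sub_one_eval]
    ring
  · have h_odd := chebyshevS_two_mul_sub_one_eval c (j + 1)
    rw [show 2 * (j + 1) - 1 = 2 * j + 1 by ring, add_sub_cancel_right] at h_odd
    rw [show (2 * j + 1 - 1) / 2 = j by lia, show (2 * j + 1) / 2 = j by lia,
      show (2 * j + 1 - 2) / 2 = j - 1 by lia, add_sub_cancel_right, h_odd, chebyshevS_two_mul_eval]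
    ring

theorem chebyshevS_eval_nonneg_of_two_le {c : ℝ} (hc : 2 ≤ c) {n : ℤ} (hn : -1 ≤ n) :
    0 ≤ (S ℝ n).eval c := by
  suffices h : 0 ≤ (S ℝ n).eval c ∧ (S ℝ n).eval c ≤ (S ℝ (n + 1)).eval c from h.1
  induction n, hn using Int.leInduction with
  | base => simp
  | succ n _ ih =>
    refine ⟨ih.1.trans ih.2, ?_⟩
    rw [S_add_one ℝ (n + 1), add_sub_cancel_right]
    simp only [eval_sub, eval_mul, eval_X]
    nlinarith [ih.1, ih.2]

theorem sin_pi_div_pos {k : ℕ} (hk : 2 ≤ k) : 0 < Real.sin (Real.pi / k) := by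
  have hk' : (2 : ℝ) ≤ k := by exact_mod_cast hk
  exact Real.sin_pos_of_pos_of_lt_pi (by positivity) (div_lt_self Real.pi_pos (by linarith))

theorem chebyshevS_eval_two_mul_cos_pi_div_nonneg {k : ℕ} (hk : 2 ≤ k) {n : ℤ} (hn : -1 ≤ n)
    (hnk : n < k) :
    0 ≤ (S ℝ n).eval (2 * Real.cos (Real.pi / k)) := by
  refine nonneg_of_mul_nonneg_left ?_ (sin_pi_div_pos hk)
  rw [S_two_mul_real_cos]
  have hn' : (0 : ℝ) ≤ n + 1 := by exact_mod_cast (by lia : 0 ≤ n + 1)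
  have hnk' : (n : ℝ) + 1 ≤ k := by exact_mod_cast hnk
  refine Real.sin_nonneg_of_nonneg_of_le_pi (by positivity) ?_
  rw [← mul_div_assoc, div_le_iff₀ (by positivity), mul_comm]
  exact mul_le_mul_of_nonneg_left hnk' Real.pi_pos.le

theorem chebyshevS_sub_one_eval_two_mul_cos_pi_div {k : ℕ} (hk : 2 ≤ k) :
    (S ℝ ((k : ℤ) - 1)).eval (2 * Real.cos (Real.pi / k)) = 0 := by
  refine (mul_eq_zero.mp ?_).resolve_right (sin_pi_div_pos hk).ne'
  rw [S_two_mul_real_cos]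
  push_cast
  rw [sub_add_cancel, mul_div_cancel₀ _ (by positivity), Real.sin_pi]

end Chebyshev

section Reflections

open Module Polynomial.Chebyshev

variable {R M : Type*} [CommRing R] [AddCommGroup M] [Module R M]

theorem reflection_mul_reflection_pow_eq_one [IsDomain R] {x y : M} {f g : Dual R M}
    (hf : f x = 2) (hg : g y = 2) {c : R} (hfy : f y = -c) (hgx : g x = -c) (hc : c ≠ 0) {k : ℕ}
    (hk : (S R ((k : ℤ) - 1)).eval c = 0) : (reflection hf * reflection hg) ^ k = 1 := by
  have h₁ := chebyshevS_eval_mul_chebyshevS_sub_one_eval c k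
  have h₂ := chebyshevS_eval_mul_chebyshevS_sub_one_eval c (k - 1)
  rw [hk, mul_zero, eq_comm, mul_eq_zero, or_iff_right hc] at h₁
  rw [hk, zero_mul, eq_comm, mul_eq_zero, or_iff_right hc, sub_sub, sub_sub, one_add_one_eq_two,
    show (1 : ℤ) + 2 = 3 by norm_num] at h₂
  ext z
  rw [reflection_mul_reflection_pow_apply hf hg k z (c ^ 2 - 2) (by rw [hfy, hgx]; ring), h₁, h₂]
  simp

theorem reflection_mul_reflection_sq_eq_one {x y : M} {f g : Dual R M}
    (hf : f x = 2) (hg : g y = 2) (hfy : f y = 0) (hgx : g x = 0) :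
    (reflection hf * reflection hg) ^ 2 = 1 := by
  ext z
  simp only [pow_two, LinearEquiv.mul_apply, reflection_apply, map_sub, map_smul, hf, hg, hfy, hgx,
    LinearEquiv.coe_one, id_eq]
  module

theorem reflection_mul_reflection_pow_eq_one_of_cos {M : Type*} [AddCommGroup M] [Module ℝ M]
    {x y : M} {f g : Dual ℝ M} (hf : f x = 2) (hg : g y = 2) {k : ℕ} (hk : 2 ≤ k)
    (hfy : f y = -(2 * Real.cos (Real.pi / k))) (hgx : g x = -(2 * Real.cos (Real.pi / k))) :
    (reflection hf * reflection hg) ^ k = 1 := by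
  obtain rfl | hk := hk.eq_or_lt
  · exact reflection_mul_reflection_sq_eq_one hf hg (by simp [hfy]) (by simp [hgx])
  · have h_cos : 0 < Real.cos (Real.pi / k) := by
      have hk' : (3 : ℝ) ≤ k := by exact_mod_cast hk
      refine Real.cos_pos_of_mem_Ioo ⟨by linarith [Real.pi_pos, show 0 < Real.pi / k by positivity],
        ?_⟩
      exact div_lt_div_of_pos_left Real.pi_pos two_pos (by linarith)
    exact reflection_mul_reflection_pow_eq_one hf hg hfy hgx (by positivity)
      (chebyshevS_sub_one_eval_two_mul_cos_pi_div hk.le)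

end Reflections

section AlternatingWords

open CoxeterSystem

variable {κ W : Type*} [Group W] {M : CoxeterMatrix κ} (cs : CoxeterSystem M W)

theorem isReduced_alternatingWord_of_length_mul_eq {v : W} {s t : κ} {m : ℕ}
    (h : cs.length (v * cs.wordProd (alternatingWord s t m)) = cs.length v + m) :
    cs.IsReduced (alternatingWord s t m) := by
  have h_mul := cs.length_mul_le v (cs.wordProd (alternatingWord s t m))
  have h_word := cs.length_wordProd_le (alternatingWord s t m)
  rw [length_alternatingWord] at h_word
  rw [CoxeterSystem.IsReduced, length_alternatingWord]
  lia

theorem not_isRightDescent_of_length_mul_alternatingWord_eq {v : W} {s t : κ} {m : ℕ}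
    (h : cs.length (v * cs.wordProd (alternatingWord s t (m + 1))) = cs.length v + (m + 1)) :
    ¬cs.IsRightDescent v (if Even m then t else s) := by
  intro h_desc
  rw [alternatingWord_succ', wordProd_cons, ← mul_assoc] at h
  have h_mul := cs.length_mul_le (v * cs.simple (if Even m then t else s))
    (cs.wordProd (alternatingWord s t m))
  have h_word := cs.length_wordProd_le (alternatingWord s t m)
  rw [length_alternatingWord] at h_word
  rw [isRightDescent_iff] at h_desc
  lia

theorem lt_of_length_mul_alternatingWord_eq {v : W} {s t : κ} {m : ℕ}
    (h : cs.length (v * cs.wordProd (alternatingWord s t m)) = cs.length v + m)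
    (hs : ¬cs.IsRightDescent (v * cs.wordProd (alternatingWord s t m)) s) (hM : M s t ≠ 0) :
    m < M s t := by
  have h_le : m ≤ M s t := by
    by_contra! h_lt
    exact cs.not_isReduced_alternatingWord s t hM h_lt
      (isReduced_alternatingWord_of_length_mul_eq cs h)
  refine h_le.lt_of_ne fun h_eq ↦ hs ?_
  obtain ⟨n, rfl⟩ := Nat.exists_eq_succ_of_ne_zero (h_eq ▸ hM)
  have h_braid : cs.wordProd (alternatingWord s t (n + 1)) =
      cs.wordProd (alternatingWord t s (n + 1)) := by
    have := cs.wordProd_braidWord_eq s t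
    rwa [braidWord, braidWord, M.symmetric t s, ← h_eq] at this
  have h_mul := cs.length_mul_le v (cs.wordProd (alternatingWord s t n))
  have h_word := cs.length_wordProd_le (alternatingWord s t n)
  rw [length_alternatingWord] at h_word
  rw [h_braid, alternatingWord_succ, wordProd_concat, ← mul_assoc] at h ⊢
  rw [isRightDescent_iff_not_isRightDescent_mul, simple_mul_simple_cancel_right,
    not_isRightDescent_iff]
  have h_step := cs.length_mul_simple (v * cs.wordProd (alternatingWord s t n)) s
  lia

theorem exists_alternatingWord_factorization_of_isRightDescent {w : W} {s t : κ}
    (ht : cs.IsRightDescent w t) : ∃ v m, w = v * cs.wordProd (alternatingWord s t m) ∧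
      cs.length w = cs.length v + m ∧ m ≠ 0 ∧ ¬cs.IsRightDescent v s ∧ ¬cs.IsRightDescent v t := by
  classical
  let P (m : ℕ) : Prop :=
    ∃ v, w = v * cs.wordProd (alternatingWord s t m) ∧ cs.length w = cs.length v + m
  have hP₁ : P 1 := ⟨w * cs.simple t, by simp [alternatingWord],
    ((cs.isRightDescent_iff).mp ht).symm⟩
  have h_bound {m : ℕ} (hm : P m) : m ≤ cs.length w := by obtain ⟨_, -, h⟩ := hm; lia
  have hP := Nat.findGreatest_spec (h_bound hP₁) hP₁
  have h_max : ¬P (Nat.findGreatest P (cs.length w) + 1) := fun h ↦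
    Nat.findGreatest_is_greatest (Nat.lt_succ_self _) (h_bound h) h
  have h_pos := Nat.le_findGreatest (h_bound hP₁) hP₁
  generalize Nat.findGreatest P (cs.length w) = m at hP h_max h_pos
  obtain ⟨m, rfl⟩ := Nat.exists_eq_succ_of_ne_zero (Nat.one_le_iff_ne_zero.mp h_pos)
  obtain ⟨v, rfl, h_len⟩ := hP
  refine ⟨v, m + 1, rfl, h_len, m.succ_ne_zero, ?_⟩
  have h_first := not_isRightDescent_of_length_mul_alternatingWord_eq cs h_len
  have h_other : ¬cs.IsRightDescent v (if Even (m + 1) then t else s) := fun h_desc ↦ by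
    refine h_max ⟨v * cs.simple (if Even (m + 1) then t else s), ?_, ?_⟩
    · rw [alternatingWord_succ' s t (m + 1), wordProd_cons, ← mul_assoc,
        simple_mul_simple_cancel_right]
    · rw [isRightDescent_iff] at h_desc
      lia
  by_cases h_even : Even m
  · simp only [Nat.even_add_one, h_even, not_true, if_true, if_false] at h_first h_other
    exact ⟨h_other, h_first⟩
  · simp only [Nat.even_add_one, h_even, not_false_eq_true, if_true, if_false] at h_first h_other
    exact ⟨h_first, h_other⟩

end AlternatingWords

section GeometricForms

variable {κ E : Type*} [AddCommGroup E] [Module ℝ E]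

theorem coxeterMatrix_two_le_of_ne (M : CoxeterMatrix κ) {i j : κ} (hij : i ≠ j) (hM : M i j ≠ 0) :
    2 ≤ M i j := by
  have := M.off_diagonal i j hij
  lia

/-- `B` is a geometric form of type `M` in the basis `Δ` of simple roots. As usual for Coxeter
matrices, `M i j = 0` encodes the label `∞`, for which `B (Δ i) (Δ j)` may be any number `≤ -1`. The
diagonal entries `M i i = 1` give `B (Δ i) (Δ i) = -cos π = 1`. -/
structure IsGeometricForm (M : CoxeterMatrix κ) (B : LinearMap.BilinForm ℝ E)
    (Δ : Module.Basis κ ℝ E) : Prop where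
  symm : ∀ u v, B u v = B v u
  apply_le : ∀ i j, M i j = 0 → B (Δ i) (Δ j) ≤ -1
  apply_eq : ∀ i j, M i j ≠ 0 → B (Δ i) (Δ j) = -Real.cos (Real.pi / M i j)

namespace IsGeometricForm

open Module CoxeterSystem Polynomial.Chebyshev

variable {M : CoxeterMatrix κ} {B : LinearMap.BilinForm ℝ E} {Δ : Basis κ ℝ E}

theorem apply_self (h : IsGeometricForm M B Δ) (i : κ) : B (Δ i) (Δ i) = 1 := by
  have := h.apply_eq i i
  simpa [M.diagonal] using this

theorem apply_nonpos (h : IsGeometricForm M B Δ) {i j : κ} (hij : i ≠ j) :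
    B (Δ i) (Δ j) ≤ 0 := by
  by_cases hM : M i j = 0
  · linarith [h.apply_le i j hM]
  · rw [h.apply_eq i j hM, neg_nonpos]
    have hk : (2 : ℝ) ≤ M i j := by exact_mod_cast coxeterMatrix_two_le_of_ne M hij hM
    have h_div : Real.pi / M i j ≤ Real.pi / 2 :=
      div_le_div_of_nonneg_left Real.pi_pos.le two_pos hk
    exact Real.cos_nonneg_of_neg_pi_div_two_le_of_le
      (by linarith [Real.pi_pos, show 0 < Real.pi / M i j by positivity]) h_div

/-- The reflection in the simple root `Δ i`. -/
def simpleReflection (h : IsGeometricForm M B Δ) (i : κ) : E ≃ₗ[ℝ] E :=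
  reflection (x := Δ i) (f := (2 : ℝ) • B (Δ i)) (by simp [h.apply_self])

theorem simpleReflection_apply (h : IsGeometricForm M B Δ) (i : κ) (v : E) :
    h.simpleReflection i v = v - (2 * B (Δ i) v) • Δ i := by
  simp [simpleReflection, reflection_apply]

theorem isLiftable_simpleReflection (h : IsGeometricForm M B Δ) :
    M.IsLiftable h.simpleReflection := by
  intro i j
  obtain rfl | hij := eq_or_ne i j
  · rw [M.diagonal, pow_one]
    exact LinearEquiv.ext (involutive_reflection _)
  by_cases hM : M i j = 0
  · rw [hM, pow_zero]
  · refine reflection_mul_reflection_pow_eq_one_of_cos _ _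
      (coxeterMatrix_two_le_of_ne M hij hM) ?_ ?_
    · simp [h.apply_eq i j hM]
    · simp [h.symm (Δ j), h.apply_eq i j hM]

/-- The geometric representation: the simple generators act by the simple reflections. -/
def rep (h : IsGeometricForm M B Δ) : M.Group →* (E ≃ₗ[ℝ] E) :=
  M.toCoxeterSystem.lift ⟨h.simpleReflection, h.isLiftable_simpleReflection⟩

theorem rep_simple (h : IsGeometricForm M B Δ) (i : κ) :
    h.rep (M.simple i) = h.simpleReflection i :=
  M.toCoxeterSystem.lift_apply_simple h.isLiftable_simpleReflection i

theorem rep_simple_apply (h : IsGeometricForm M B Δ) (i : κ) (v : E) :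
    h.rep (M.simple i) v = v - (2 * B (Δ i) v) • Δ i := by
  rw [rep_simple, simpleReflection_apply]

theorem rep_simple_self (h : IsGeometricForm M B Δ) (i : κ) :
    h.rep (M.simple i) (Δ i) = -Δ i := by
  rw [rep_simple_apply, h.apply_self]
  module

theorem rep_simple_mul_apply (h : IsGeometricForm M B Δ) (i : κ) (w : M.Group) (v : E) :
    h.rep (M.simple i * w) v = h.rep w v - (2 * B (Δ i) (h.rep w v)) • Δ i := by
  rw [map_mul, LinearEquiv.mul_apply, rep_simple_apply]

theorem apply_rep_rep (h : IsGeometricForm M B Δ) (w : M.Group) (u v : E) :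
    B (h.rep w u) (h.rep w v) = B u v := by
  induction w using M.toCoxeterSystem.simple_induction_left with
  | one => simp
  | mul_simple_left w i ih =>
    rw [CoxeterMatrix.toCoxeterSystem_simple]
    simp only [rep_simple_mul_apply, map_sub, map_smul, LinearMap.sub_apply, LinearMap.smul_apply,
      smul_eq_mul, h.apply_self, ih, h.symm (h.rep w u) (Δ i)]
    ring

theorem rep_apply_eq_self_of_apply_eq_zero (h : IsGeometricForm M B Δ) {d : E}
    (hd : ∀ i, B (Δ i) d = 0) (w : M.Group) : h.rep w d = d := by
  induction w using M.toCoxeterSystem.simple_induction_left with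
  | one => simp
  | mul_simple_left w i ih =>
    rw [CoxeterMatrix.toCoxeterSystem_simple, rep_simple_mul_apply, ih, hd, mul_zero, zero_smul,
      sub_zero]

theorem rep_alternatingWord (h : IsGeometricForm M B Δ) (s t : κ) (m : ℕ) :
    h.rep (M.toCoxeterSystem.wordProd (alternatingWord s t m)) (Δ s) =
      (S ℝ m).eval (-(2 * B (Δ s) (Δ t))) • Δ (if Even m then s else t) +
      (S ℝ (m - 1)).eval (-(2 * B (Δ s) (Δ t))) • Δ (if Even m then t else s) := by
  induction m with
  | zero => simp [alternatingWord]
  | succ m ih =>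
    rw [alternatingWord_succ', wordProd_cons, CoxeterMatrix.toCoxeterSystem_simple,
      rep_simple_mul_apply, ih]
    push_cast
    rw [add_sub_cancel_right, S_add_one]
    simp only [Nat.even_add_one, map_add, map_smul, smul_eq_mul, Polynomial.eval_sub,
      Polynomial.eval_mul, Polynomial.eval_X]
    split_ifs
    · rw [h.symm (Δ t) (Δ s), h.apply_self]
      module
    · rw [h.apply_self]
      module

theorem chebyshevS_eval_nonneg (h : IsGeometricForm M B Δ) {s t : κ} (hst : s ≠ t) {n : ℤ}
    (hn : -1 ≤ n) (hnM : M s t ≠ 0 → n < M s t) : 0 ≤ (S ℝ n).eval (-(2 * B (Δ s) (Δ t))) := by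
  by_cases hM : M s t = 0
  · exact chebyshevS_eval_nonneg_of_two_le (by linarith [h.apply_le s t hM]) hn
  · rw [h.apply_eq s t hM, mul_neg, neg_neg]
    exact chebyshevS_eval_two_mul_cos_pi_div_nonneg (coxeterMatrix_two_le_of_ne M hst hM) hn
      (hnM hM)

theorem exists_nonneg_rep_alternatingWord (h : IsGeometricForm M B Δ) {s t : κ} (hst : s ≠ t)
    {m : ℕ} (hm : M s t ≠ 0 → m < M s t) : ∃ p q : ℝ, 0 ≤ p ∧ 0 ≤ q ∧
      h.rep (M.toCoxeterSystem.wordProd (alternatingWord s t m)) (Δ s) = p • Δ s + q • Δ t := by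
  have h_top := h.chebyshevS_eval_nonneg hst (n := m) (by lia) (by exact_mod_cast hm)
  have h_sub := h.chebyshevS_eval_nonneg hst (n := m - 1) (by lia) (by lia)
  have h_eq := h.rep_alternatingWord s t m
  split_ifs at h_eq
  · exact ⟨_, _, h_top, h_sub, h_eq⟩
  · exact ⟨_, _, h_sub, h_top, h_eq.trans (add_comm _ _)⟩

theorem repr_rep_nonneg_of_not_isRightDescent (h : IsGeometricForm M B Δ) {w : M.Group} {s : κ}
    (hs : ¬M.toCoxeterSystem.IsRightDescent w s) (i : κ) : 0 ≤ Δ.repr (h.rep w (Δ s)) i := by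
  induction hn : M.toCoxeterSystem.length w using Nat.strong_induction_on generalizing w s with
  | _ n ih =>
    subst hn
    obtain rfl | hw := eq_or_ne w 1
    · rw [map_one, LinearEquiv.coe_one, id_eq, Basis.repr_self]
      exact Finsupp.single_nonneg.mpr zero_le_one i
    obtain ⟨t, ht⟩ := M.toCoxeterSystem.exists_rightDescent_of_ne_one hw
    have hst : s ≠ t := by rintro rfl; exact hs ht
    obtain ⟨v, m, rfl, h_len, hm, hvs, hvt⟩ :=
      exists_alternatingWord_factorization_of_isRightDescent M.toCoxeterSystem (s := s) ht
    obtain ⟨p, q, hp, hq, h_eq⟩ := h.exists_nonneg_rep_alternatingWord hst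
      (lt_of_length_mul_alternatingWord_eq M.toCoxeterSystem h_len hs)
    have hs_nonneg := ih _ (by lia) hvs rfl
    have ht_nonneg := ih _ (by lia) hvt rfl
    rw [map_mul, LinearEquiv.mul_apply, h_eq]
    simp only [map_add, map_smul, Finsupp.add_apply, Finsupp.smul_apply, smul_eq_mul]
    positivity

theorem repr_rep_nonneg_or_nonpos (h : IsGeometricForm M B Δ) (w : M.Group) (s : κ) :
    (∀ i, 0 ≤ Δ.repr (h.rep w (Δ s)) i) ∨ ∀ i, Δ.repr (h.rep w (Δ s)) i ≤ 0 := by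
  by_cases hs : M.toCoxeterSystem.IsRightDescent w s
  · rw [isRightDescent_iff_not_isRightDescent_mul, CoxeterMatrix.toCoxeterSystem_simple] at hs
    refine Or.inr fun i ↦ ?_
    have h_nonneg := h.repr_rep_nonneg_of_not_isRightDescent hs i
    rw [map_mul, LinearEquiv.mul_apply, rep_simple_self] at h_nonneg
    simpa using h_nonneg
  · exact Or.inl (h.repr_rep_nonneg_of_not_isRightDescent hs)

end IsGeometricForm

theorem exists_isGeometricForm {B : LinearMap.BilinForm ℝ E} {Δ : Module.Basis κ ℝ E}
    (hsymm : ∀ u v, B u v = B v u) (hdiag : ∀ i, B (Δ i) (Δ i) = 1)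
    (hoff : ∀ i j, i ≠ j → B (Δ i) (Δ j) ≤ -1 ∨
      ∃ k : ℕ, 2 ≤ k ∧ B (Δ i) (Δ j) = -Real.cos (Real.pi / k)) :
    ∃ M : CoxeterMatrix κ, IsGeometricForm M B Δ := by
  classical
  have h_label (r : ℝ) (hr : r ≤ -1 ∨ ∃ k : ℕ, 2 ≤ k ∧ r = -Real.cos (Real.pi / k)) :
      ∃ k : ℕ, k ≠ 1 ∧ (k = 0 → r ≤ -1) ∧ (k ≠ 0 → r = -Real.cos (Real.pi / k)) := by
    obtain hr | ⟨k, hk, rfl⟩ := hr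
    · exact ⟨0, by simp [hr]⟩
    · exact ⟨k, by lia, by lia, fun _ ↦ rfl⟩
  choose! label h_ne_one h_zero h_ne_zero using h_label
  refine ⟨⟨.of fun i j ↦ if i = j then 1 else label (B (Δ i) (Δ j)), ?_, by simp, ?_⟩, hsymm,
    ?_, ?_⟩
  · ext i j
    simp [hsymm (Δ j), eq_comm]
  · intro i j hij
    simp [hij, h_ne_one _ (hoff i j hij)]
  · intro i j hM
    obtain rfl | hij := eq_or_ne i j
    · simp at hM
    · exact h_zero _ (hoff i j hij) (by simpa [hij] using hM)
  · intro i j hM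
    obtain rfl | hij := eq_or_ne i j
    · simp [hdiag]
    · simpa [hij] using h_ne_zero _ (hoff i j hij) (by simpa [hij] using hM)

end GeometricForms

section RootSystem

open Module CoxeterSystem

variable {κ E : Type*} [NormedAddCommGroup E] [NormedSpace ℝ E]
variable {M : CoxeterMatrix κ} {B : LinearMap.BilinForm ℝ E} {Δ : Basis κ ℝ E}

theorem basis_mem_Phi (B : LinearMap.BilinForm ℝ E) (Δ : Basis κ ℝ E) (i : κ) : Δ i ∈ Phi B Δ :=
  ⟨1, one_mem _, i, rfl⟩

theorem basis_mem_posPhi (B : LinearMap.BilinForm ℝ E) (Δ : Basis κ ℝ E) (i : κ) :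
    Δ i ∈ posPhi B Δ :=
  ⟨basis_mem_Phi B Δ i, fun j ↦ by
    rw [Basis.repr_self]
    exact Finsupp.single_nonneg.mpr zero_le_one j⟩

theorem eq_zero_of_repr_nonneg_of_repr_neg_nonneg {v : E} (hv : ∀ i, 0 ≤ Δ.repr v i)
    (hv' : ∀ i, 0 ≤ Δ.repr (-v) i) : v = 0 :=
  Δ.ext_elem fun i ↦ by
    have h_neg := hv' i
    rw [map_neg, Finsupp.neg_apply, neg_nonneg] at h_neg
    rw [map_zero, Finsupp.zero_apply]
    exact h_neg.antisymm (hv i)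

namespace IsGeometricForm

theorem cox_eq_range_rep (h : IsGeometricForm M B Δ) : cox B Δ = h.rep.range := by
  have h_simple : simpleReflections B Δ = h.rep '' Set.range M.toCoxeterSystem.simple := by
    ext e
    simp only [simpleReflections, Set.mem_ofPred_eq, ← Set.range_comp, Set.mem_range,
      LinearEquiv.ext_iff, Function.comp_apply, CoxeterMatrix.toCoxeterSystem_simple,
      h.rep_simple_apply, h.apply_self, div_one, eq_comm]
  rw [cox, h_simple, ← MonoidHom.map_closure, M.toCoxeterSystem.subgroup_closure_range_simple,
    MonoidHom.range_eq_map]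

theorem mem_Phi_iff (h : IsGeometricForm M B Δ) {ρ : E} :
    ρ ∈ Phi B Δ ↔ ∃ w i, h.rep w (Δ i) = ρ := by
  simp only [Phi, h.cox_eq_range_rep, MonoidHom.mem_range, Set.mem_ofPred_eq,
    exists_exists_eq_and]

theorem rep_mem_Phi (h : IsGeometricForm M B Δ) (w : M.Group) {ρ : E} (hρ : ρ ∈ Phi B Δ) :
    h.rep w ρ ∈ Phi B Δ := by
  obtain ⟨v, i, rfl⟩ := h.mem_Phi_iff.mp hρ
  exact h.mem_Phi_iff.mpr ⟨w * v, i, by rw [map_mul, LinearEquiv.mul_apply]⟩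

theorem apply_self_of_mem_Phi (h : IsGeometricForm M B Δ) {ρ : E} (hρ : ρ ∈ Phi B Δ) :
    B ρ ρ = 1 := by
  obtain ⟨w, i, rfl⟩ := h.mem_Phi_iff.mp hρ
  rw [h.apply_rep_rep, h.apply_self]

theorem ne_zero_of_mem_Phi (h : IsGeometricForm M B Δ) {ρ : E} (hρ : ρ ∈ Phi B Δ) : ρ ≠ 0 := by
  rintro rfl
  simpa using h.apply_self_of_mem_Phi hρ

theorem neg_mem_Phi (h : IsGeometricForm M B Δ) {ρ : E} (hρ : ρ ∈ Phi B Δ) : -ρ ∈ Phi B Δ := by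
  obtain ⟨w, i, rfl⟩ := h.mem_Phi_iff.mp hρ
  exact h.mem_Phi_iff.mpr
    ⟨w * M.simple i, i, by rw [map_mul, LinearEquiv.mul_apply, h.rep_simple_self, map_neg]⟩

theorem mem_posPhi_or_neg_mem_posPhi (h : IsGeometricForm M B Δ) {ρ : E} (hρ : ρ ∈ Phi B Δ) :
    ρ ∈ posPhi B Δ ∨ -ρ ∈ posPhi B Δ := by
  obtain ⟨w, i, rfl⟩ := h.mem_Phi_iff.mp hρ
  refine (h.repr_rep_nonneg_or_nonpos w i).imp (⟨hρ, ·⟩) fun h_nonpos ↦ ⟨h.neg_mem_Phi hρ, ?_⟩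
  simpa using h_nonpos

theorem neg_notMem_posPhi (h : IsGeometricForm M B Δ) {ρ : E} (hρ : ρ ∈ posPhi B Δ) :
    -ρ ∉ posPhi B Δ := fun hρ' ↦
  h.ne_zero_of_mem_Phi hρ.1 (eq_zero_of_repr_nonneg_of_repr_neg_nonneg hρ.2 hρ'.2)

theorem eq_one_of_forall_rep_mem_posPhi (h : IsGeometricForm M B Δ) {w : M.Group}
    (hw : ∀ i, h.rep w (Δ i) ∈ posPhi B Δ) : w = 1 := by
  by_contra h_ne
  obtain ⟨i, hi⟩ := M.toCoxeterSystem.exists_rightDescent_of_ne_one h_ne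
  rw [isRightDescent_iff_not_isRightDescent_mul, CoxeterMatrix.toCoxeterSystem_simple] at hi
  refine h.neg_notMem_posPhi (hw i) ⟨h.neg_mem_Phi (hw i).1, fun j ↦ ?_⟩
  have h_nonneg := h.repr_rep_nonneg_of_not_isRightDescent hi j
  rwa [map_mul, LinearEquiv.mul_apply, h.rep_simple_self, map_neg] at h_nonneg

theorem eq_of_eq_smul (h : IsGeometricForm M B Δ) {ρ σ : E} (hρ : ρ ∈ posPhi B Δ)
    (hσ : σ ∈ posPhi B Δ) {c : ℝ} (hc : ρ = c • σ) : ρ = σ := by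
  have h_sq : c * c = 1 := by
    have := h.apply_self_of_mem_Phi hρ.1
    simpa [hc, h.apply_self_of_mem_Phi hσ.1] using this
  obtain rfl | rfl := mul_self_eq_one_iff.mp h_sq
  · rw [hc, one_smul]
  · rw [neg_one_smul] at hc
    exact absurd (hc ▸ hρ) (h.neg_notMem_posPhi hσ)

theorem rep_simple_mem_posPhi (h : IsGeometricForm M B Δ) {ρ : E} (hρ : ρ ∈ posPhi B Δ) {i : κ}
    (hi : ρ ≠ Δ i) : h.rep (M.simple i) ρ ∈ posPhi B Δ := by
  refine (h.mem_posPhi_or_neg_mem_posPhi (h.rep_mem_Phi (M.simple i) hρ.1)).resolve_right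
    fun h_neg ↦ hi (h.eq_of_eq_smul hρ (basis_mem_posPhi B Δ i) (c := Δ.repr ρ i) ?_)
  refine Δ.ext_elem fun j ↦ ?_
  obtain rfl | hij := eq_or_ne i j
  · simp
  · have h_nonpos := h_neg.2 j
    simp only [h.rep_simple_apply, neg_sub, map_sub, map_smul, Basis.repr_self, Finsupp.sub_apply,
      Finsupp.smul_apply, Finsupp.single_eq_of_ne' hij, smul_zero, zero_sub, neg_nonneg]
      at h_nonpos
    simp only [map_smul, Basis.repr_self, Finsupp.smul_apply, Finsupp.single_eq_of_ne' hij,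
      smul_zero]
    exact h_nonpos.antisymm (hρ.2 j)

theorem exists_rep_eq_reflection (h : IsGeometricForm M B Δ) {ρ : E} (hρ : ρ ∈ Phi B Δ) :
    ∃ w, ∀ u, h.rep w u = u - (2 * B ρ u) • ρ := by
  obtain ⟨w, i, rfl⟩ := h.mem_Phi_iff.mp hρ
  refine ⟨w * M.simple i * w⁻¹, fun u ↦ ?_⟩
  have h_cancel : h.rep w (h.rep w⁻¹ u) = u := by
    rw [← LinearEquiv.mul_apply, ← map_mul, mul_inv_cancel, map_one, LinearEquiv.coe_one, id_eq]
  have h_form : B (Δ i) (h.rep w⁻¹ u) = B (h.rep w (Δ i)) u := by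
    rw [← h.apply_rep_rep w, h_cancel]
  rw [map_mul, map_mul, LinearEquiv.mul_apply, LinearEquiv.mul_apply, h.rep_simple_apply, map_sub,
    map_smul, h_cancel, h_form]

end IsGeometricForm

end RootSystem

section Discreteness

open Module

theorem continuous_bilinForm {E : Type*} [NormedAddCommGroup E] [NormedSpace ℝ E]
    [FiniteDimensional ℝ E] (B : LinearMap.BilinForm ℝ E) :
    Continuous fun p : E × E ↦ B p.1 p.2 :=
  (LinearMap.toContinuousBilinearMap B).continuous₂

theorem continuous_preReflection_bilinForm {E : Type*} [NormedAddCommGroup E] [NormedSpace ℝ E]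
    [FiniteDimensional ℝ E] (B : LinearMap.BilinForm ℝ E) :
    Continuous fun p : E × E ↦ preReflection p.1 ((2 : ℝ) • B p.1) p.2 :=
  continuous_snd.sub ((continuous_const.mul (continuous_bilinForm B)).smul continuous_fst)

theorem isClosed_setOf_repr_nonneg {κ E : Type*} [Finite κ] [NormedAddCommGroup E]
    [NormedSpace ℝ E] (Δ : Basis κ ℝ E) : IsClosed {v | ∀ i, 0 ≤ Δ.repr v i} := by
  have := Module.Finite.of_basis Δ
  rw [Set.ofPred_forall]
  exact isClosed_iInter fun i ↦
    isClosed_le continuous_const (Δ.coord i).continuous_of_finiteDimensional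

variable {κ E : Type*} [Fintype κ] [NormedAddCommGroup E] [NormedSpace ℝ E]
variable {M : CoxeterMatrix κ} {B : LinearMap.BilinForm ℝ E} {Δ : Basis κ ℝ E}

theorem l1_eq_sumCoords (Δ : Basis κ ℝ E) : l1 Δ = Δ.sumCoords :=
  Δ.coe_sumCoords_of_fintype.symm ▸ by ext; simp [l1]

theorem l1_add (u v : E) : l1 Δ (u + v) = l1 Δ u + l1 Δ v := by
  simp only [l1_eq_sumCoords, map_add]

theorem l1_neg (v : E) : l1 Δ (-v) = -l1 Δ v := by
  simp only [l1_eq_sumCoords, map_neg]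

theorem l1_smul (c : ℝ) (v : E) : l1 Δ (c • v) = c * l1 Δ v := by
  simp only [l1_eq_sumCoords, map_smul, smul_eq_mul]

theorem l1_basis (i : κ) : l1 Δ (Δ i) = 1 := by
  rw [l1_eq_sumCoords, Basis.sumCoords_self_apply]

theorem continuous_l1 (Δ : Basis κ ℝ E) : Continuous (l1 Δ) := by
  have := Module.Finite.of_basis Δ
  rw [l1_eq_sumCoords]
  exact LinearMap.continuous_of_finiteDimensional _

theorem isCompact_setOf_repr_nonneg_l1_le (Δ : Basis κ ℝ E) (C : ℝ) :
    IsCompact {v | (∀ i, 0 ≤ Δ.repr v i) ∧ l1 Δ v ≤ C} := by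
  have := Module.Finite.of_basis Δ
  let e := Δ.equivFun.toContinuousLinearEquiv.toHomeomorph
  refine (e.isCompact_preimage.mpr (isCompact_Icc (a := 0) (b := fun _ ↦ C))).of_isClosed_subset
    ((isClosed_setOf_repr_nonneg Δ).inter (isClosed_le (continuous_l1 Δ) continuous_const))
    fun v hv ↦ ⟨hv.1, fun i ↦ ?_⟩
  exact (Finset.single_le_sum (fun j _ ↦ hv.1 j) (Finset.mem_univ i)).trans hv.2

theorem eventually_l1_reflection_reflection_pos (B : LinearMap.BilinForm ℝ E) (Δ : Basis κ ℝ E)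
    {p : E} (hp : B p p = 1) :
    ∀ᶠ q : E × E in 𝓝 p ×ˢ 𝓝 p, ∀ i, 0 < l1 Δ (preReflection q.1 ((2 : ℝ) • B q.1)
      (preReflection q.2 ((2 : ℝ) • B q.2) (Δ i))) := by
  have := Module.Finite.of_basis Δ
  rw [eventually_all, ← nhds_prod_eq]
  refine fun i ↦ ((continuous_l1 Δ).comp ?_).continuousAt.eventually_const_lt ?_
  · have h_cont := continuous_preReflection_bilinForm B
    exact h_cont.comp (continuous_fst.prodMk (h_cont.comp (continuous_snd.prodMk continuous_const)))
  · rw [Function.comp_apply, involutive_preReflection (by simp [hp]), l1_basis]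
    exact one_pos

namespace IsGeometricForm

theorem l1_pos (h : IsGeometricForm M B Δ) {ρ : E} (hρ : ρ ∈ posPhi B Δ) : 0 < l1 Δ ρ := by
  refine (Finset.sum_nonneg fun i _ ↦ hρ.2 i).lt_of_ne fun h_zero ↦ h.ne_zero_of_mem_Phi hρ.1 ?_
  refine Δ.ext_elem fun i ↦ ?_
  simpa using (Finset.sum_eq_zero_iff_of_nonneg fun i _ ↦ hρ.2 i).mp h_zero.symm i
    (Finset.mem_univ i)

theorem mem_posPhi_of_l1_pos (h : IsGeometricForm M B Δ) {ρ : E} (hρ : ρ ∈ Phi B Δ)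
    (hl : 0 < l1 Δ ρ) : ρ ∈ posPhi B Δ := by
  refine (h.mem_posPhi_or_neg_mem_posPhi hρ).resolve_right fun h_neg ↦ ?_
  have := h.l1_pos h_neg
  rw [l1_neg] at this
  linarith

theorem eq_of_forall_l1_reflection_reflection_pos (h : IsGeometricForm M B Δ) {ρ σ : E}
    (hρ : ρ ∈ posPhi B Δ) (hσ : σ ∈ posPhi B Δ)
    (h_pos : ∀ i, 0 < l1 Δ (preReflection ρ ((2 : ℝ) • B ρ)
      (preReflection σ ((2 : ℝ) • B σ) (Δ i)))) : ρ = σ := by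
  obtain ⟨v, hv⟩ := h.exists_rep_eq_reflection hρ.1
  obtain ⟨w, hw⟩ := h.exists_rep_eq_reflection hσ.1
  have h_mul (u : E) : h.rep (v * w) u =
      preReflection ρ ((2 : ℝ) • B ρ) (preReflection σ ((2 : ℝ) • B σ) u) := by
    rw [map_mul, LinearEquiv.mul_apply, hv, hw]
    rfl
  have h_one : v * w = 1 := h.eq_one_of_forall_rep_mem_posPhi fun i ↦
    h.mem_posPhi_of_l1_pos (h.rep_mem_Phi _ (basis_mem_Phi B Δ i)) (h_mul (Δ i) ▸ h_pos i)
  have h_fix := h_mul σ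
  rw [h_one, map_one, LinearEquiv.coe_one, id_eq,
    preReflection_apply_self (by simp [h.apply_self_of_mem_Phi hσ.1]), map_neg, preReflection_apply,
    LinearMap.smul_apply, smul_eq_mul, neg_sub, mul_smul, eq_sub_iff_add_eq, ← two_smul ℝ] at h_fix
  exact (h.eq_of_eq_smul hσ hρ (smul_right_injective E two_ne_zero h_fix)).symm

theorem finite_setOf_mem_posPhi_l1_le (h : IsGeometricForm M B Δ) (C : ℝ) :
    {ρ ∈ posPhi B Δ | l1 Δ ρ ≤ C}.Finite := by
  have := Module.Finite.of_basis Δ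
  by_contra h_inf
  obtain ⟨p, -, hp⟩ := Set.Infinite.exists_accPt_of_subset_isCompact h_inf
    (isCompact_setOf_repr_nonneg_l1_le Δ C) fun ρ hρ ↦ ⟨hρ.1.2, hρ.2⟩
  have h_closed : IsClosed {v | B v v = 1} := isClosed_eq
    ((continuous_bilinForm B).comp (continuous_id.prodMk continuous_id)) continuous_const
  have hpp : B p p = 1 := closure_minimal (fun ρ hρ ↦ h.apply_self_of_mem_Phi hρ.1.1) h_closed
    hp.clusterPt.mem_closure
  obtain ⟨U, hU, hU_pos⟩ :=
    eventually_prod_self_iff (r := fun ρ σ ↦ ∀ i, 0 < l1 Δ (preReflection ρ ((2 : ℝ) • B ρ)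
      (preReflection σ ((2 : ℝ) • B σ) (Δ i))))
      |>.mp (eventually_l1_reflection_reflection_pos B Δ hpp)
  obtain ⟨ρ, hρ, σ, hσ, h_ne⟩ := (Set.Infinite.of_accPt (hp.nhds_inter hU)).nontrivial
  exact h_ne (h.eq_of_forall_l1_reflection_reflection_pos hρ.2.1 hσ.2.1 (hU_pos ρ hρ.1 σ hσ.1))

end IsGeometricForm

end Discreteness

section SemidefiniteForms

open Module

variable {κ E : Type*} [AddCommGroup E] [Module ℝ E]
variable {M : CoxeterMatrix κ} {B : LinearMap.BilinForm ℝ E} {Δ : Basis κ ℝ E}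

theorem mem_span_basis_image_iff {J : Set κ} {v : E} :
    v ∈ Submodule.span ℝ (Δ '' J) ↔ ∀ i ∉ J, Δ.repr v i = 0 := by
  rw [Δ.mem_span_image, Set.subset_def]
  refine forall_congr' fun i ↦ ?_
  rw [Finset.mem_coe, Finsupp.mem_support_iff, not_imp_comm]

theorem bilinForm_eq_sum [Fintype κ] (u v : E) :
    B u v = ∑ i, Δ.repr u i * B (Δ i) v := by
  conv_lhs => rw [← Δ.sum_repr u, map_sum, LinearMap.sum_apply]
  simp only [map_smul, LinearMap.smul_apply, smul_eq_mul]

theorem apply_eq_zero_of_mem_span {J : Set κ} (hJ : ∀ i ∉ J, ∀ j ∈ J, B (Δ j) (Δ i) = 0) {v : E}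
    (hv : v ∈ Submodule.span ℝ (Δ '' J)) {i : κ} (hi : i ∉ J) : B v (Δ i) = 0 := by
  have h_ker : Submodule.span ℝ (Δ '' J) ≤ LinearMap.ker (B.flip (Δ i)) :=
    Submodule.span_le.mpr (Set.forall_mem_image.mpr fun j hj ↦ hJ i hi j hj)
  exact h_ker hv

theorem sum_sum_mul_nonneg_of_sum_eq_zero [Fintype κ] {A : κ → κ → ℝ}
    (h_symm : ∀ i j, A i j = A j i) (h_nonpos : ∀ i j, i ≠ j → A i j ≤ 0)
    (h_sum : ∀ i, ∑ j, A i j = 0) (y : κ → ℝ) : 0 ≤ ∑ i, ∑ j, A i j * (y i * y j) := by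
  have h_left : ∑ i, ∑ j, A i j * y i ^ 2 = 0 := by
    simp only [← Finset.sum_mul, h_sum, zero_mul, Finset.sum_const_zero]
  have h_right : ∑ i, ∑ j, A i j * y j ^ 2 = 0 := by
    rw [Finset.sum_comm, ← h_left]
    simp only [h_symm]
  have h_sq : ∑ i, ∑ j, A i j * (y i - y j) ^ 2 = -2 * ∑ i, ∑ j, A i j * (y i * y j) := by
    calc ∑ i, ∑ j, A i j * (y i - y j) ^ 2
        = ∑ i, ∑ j, (A i j * y i ^ 2 + A i j * y j ^ 2 + -2 * (A i j * (y i * y j))) :=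
          Finset.sum_congr rfl fun i _ ↦ Finset.sum_congr rfl fun j _ ↦ by ring
      _ = -2 * ∑ i, ∑ j, A i j * (y i * y j) := by
          simp only [Finset.sum_add_distrib, h_left, h_right, Finset.mul_sum, zero_add]
  have h_sq_nonpos : ∑ i, ∑ j, A i j * (y i - y j) ^ 2 ≤ 0 :=
    Finset.sum_nonpos fun i _ ↦ Finset.sum_nonpos fun j _ ↦ by
      obtain rfl | hij := eq_or_ne i j
      · simp
      · exact mul_nonpos_of_nonpos_of_nonneg (h_nonpos i j hij) (sq_nonneg _)
  linarith

namespace IsGeometricForm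

theorem apply_eq_zero_of_radical [Finite κ] (h : IsGeometricForm M B Δ) {x : E}
    (hx : ∀ i, 0 ≤ Δ.repr x i) (h_rad : B x = 0) {i j : κ} (hi : Δ.repr x i = 0)
    (hj : Δ.repr x j ≠ 0) : B (Δ j) (Δ i) = 0 := by
  cases nonempty_fintype κ
  have h_nonpos (l : κ) : Δ.repr x l * B (Δ l) (Δ i) ≤ 0 := by
    obtain rfl | hli := eq_or_ne l i
    · rw [hi, zero_mul]
    · exact mul_nonpos_of_nonneg_of_nonpos (hx l) (h.apply_nonpos hli)
  have h_sum : ∑ l, Δ.repr x l * B (Δ l) (Δ i) = 0 := by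
    rw [← bilinForm_eq_sum, h_rad, LinearMap.zero_apply]
  rw [Finset.sum_eq_zero_iff_of_nonpos fun l _ ↦ h_nonpos l] at h_sum
  exact (mul_eq_zero.mp (h_sum j (Finset.mem_univ j))).resolve_left hj

/-- Rescaling the simple roots by the coordinates of `x` turns the Gram matrix of `B` into the
Laplacian of a graph with nonnegative weights. -/
theorem apply_self_nonneg_of_radical [Finite κ] (h : IsGeometricForm M B Δ) {x : E}
    (hx : ∀ i, 0 ≤ Δ.repr x i) (h_rad : B x = 0) {v : E}
    (hv : v ∈ Submodule.span ℝ (Δ '' {i | Δ.repr x i ≠ 0})) : 0 ≤ B v v := by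
  cases nonempty_fintype κ
  obtain ⟨y, hy⟩ : ∃ y : κ → ℝ, ∀ i, Δ.repr v i = Δ.repr x i * y i :=
    ⟨fun i ↦ Δ.repr v i / Δ.repr x i, fun i ↦ (mul_div_cancel_of_imp' fun hi ↦
      mem_span_basis_image_iff.mp hv i (not_not_intro hi)).symm⟩
  have h_laplacian := sum_sum_mul_nonneg_of_sum_eq_zero
    (A := fun i j ↦ Δ.repr x i * (Δ.repr x j * B (Δ j) (Δ i)))
    (fun i j ↦ by rw [mul_left_comm, h.symm])
    (fun i j hij ↦ mul_nonpos_of_nonneg_of_nonpos (hx i) <|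
      mul_nonpos_of_nonneg_of_nonpos (hx j) (h.apply_nonpos hij.symm))
    (fun i ↦ by
      rw [← Finset.mul_sum, ← bilinForm_eq_sum, h_rad, LinearMap.zero_apply, mul_zero]) y
  refine h_laplacian.trans_eq ?_
  calc ∑ i, ∑ j, Δ.repr x i * (Δ.repr x j * B (Δ j) (Δ i)) * (y i * y j)
      = ∑ i, Δ.repr v i * ∑ j, Δ.repr v j * B (Δ j) (Δ i) := by
        simp only [Finset.mul_sum, hy]
        exact Finset.sum_congr rfl fun i _ ↦ Finset.sum_congr rfl fun j _ ↦ by ring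
    _ = ∑ i, Δ.repr v i * B (Δ i) v := by simp only [← bilinForm_eq_sum, h.symm v]
    _ = B v v := (bilinForm_eq_sum v v).symm

theorem rep_simple_mem_span (h : IsGeometricForm M B Δ) {J : Set κ} {i : κ} (hi : i ∈ J) {v : E}
    (hv : v ∈ Submodule.span ℝ (Δ '' J)) :
    h.rep (M.simple i) v ∈ Submodule.span ℝ (Δ '' J) := by
  rw [h.rep_simple_apply]
  exact sub_mem hv (Submodule.smul_mem _ _ (Submodule.subset_span ⟨i, hi, rfl⟩))

theorem rep_mem_span_of_mem_closure (h : IsGeometricForm M B Δ) {J : Set κ} {w : M.Group}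
    (hw : w ∈ Subgroup.closure (M.simple '' J)) {v : E} (hv : v ∈ Submodule.span ℝ (Δ '' J)) :
    h.rep w v ∈ Submodule.span ℝ (Δ '' J) := by
  induction hw using Subgroup.closure_induction_left with
  | one => rwa [map_one]
  | mul_left s hs w _ ih =>
    obtain ⟨i, hi, rfl⟩ := hs
    rw [map_mul]
    exact h.rep_simple_mem_span hi ih
  | inv_mul_cancel s hs w _ ih =>
    obtain ⟨i, hi, rfl⟩ := hs
    rw [← CoxeterMatrix.toCoxeterSystem_simple, CoxeterSystem.inv_simple, map_mul,
      CoxeterMatrix.toCoxeterSystem_simple]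
    exact h.rep_simple_mem_span hi ih

theorem rep_mem_span_of_apply_eq_zero (h : IsGeometricForm M B Δ) {J : Set κ}
    (hJ : ∀ i ∉ J, ∀ j ∈ J, B (Δ j) (Δ i) = 0) (w : M.Group) {v : E}
    (hv : v ∈ Submodule.span ℝ (Δ '' J)) : h.rep w v ∈ Submodule.span ℝ (Δ '' J) := by
  induction w using M.toCoxeterSystem.simple_induction_left with
  | one => rwa [map_one]
  | mul_simple_left w i ih =>
    rw [CoxeterMatrix.toCoxeterSystem_simple, map_mul]
    by_cases hi : i ∈ J
    · exact h.rep_simple_mem_span hi ih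
    · rwa [LinearEquiv.mul_apply, h.rep_simple_apply, h.symm, apply_eq_zero_of_mem_span hJ ih hi,
        mul_zero, zero_smul, sub_zero]

end IsGeometricForm

end SemidefiniteForms

section ParabolicRoots

open Module

variable {κ E : Type*} [NormedAddCommGroup E] [NormedSpace ℝ E]
variable {M : CoxeterMatrix κ} {B : LinearMap.BilinForm ℝ E} {Δ : Basis κ ℝ E} {J : Set κ}

/-- The roots in the span of the simple roots indexed by `J`, that is, the root system of a standard
parabolic subgroup. -/
def parabolicRoots (B : LinearMap.BilinForm ℝ E) (Δ : Basis κ ℝ E) (J : Set κ) : Set E :=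
  {ρ ∈ Phi B Δ | ρ ∈ Submodule.span ℝ (Δ '' J)}

/-- A functional which is positive on all but finitely many positive roots in the span of the simple
roots indexed by `J`. Such a functional lies in the Tits cone, so that it has a dominant
conjugate. -/
def IsAlmostPositive (B : LinearMap.BilinForm ℝ E) (Δ : Basis κ ℝ E) (J : Set κ)
    (f : E →ₗ[ℝ] ℝ) : Prop :=
  {ρ ∈ posPhi B Δ | ρ ∈ Submodule.span ℝ (Δ '' J) ∧ f ρ ≤ 0}.Finite

theorem mem_span_setOf_apply_eq_zero {f : E →ₗ[ℝ] ℝ} (hf : ∀ i ∈ J, 0 ≤ f (Δ i)) {v : E}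
    (hv : ∀ i, 0 ≤ Δ.repr v i) (hvJ : v ∈ Submodule.span ℝ (Δ '' J)) (hfv : f v = 0) :
    v ∈ Submodule.span ℝ (Δ '' {i ∈ J | f (Δ i) = 0}) := by
  rw [mem_span_basis_image_iff] at hvJ ⊢
  have h_nonneg (i : κ) : 0 ≤ Δ.repr v i * f (Δ i) := by
    by_cases hi : i ∈ J
    · exact mul_nonneg (hv i) (hf i hi)
    · rw [hvJ i hi, zero_mul]
  rw [← Δ.linearCombination_repr v, Finsupp.apply_linearCombination,
    Finsupp.linearCombination_apply, Finsupp.sum] at hfv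
  simp only [Function.comp_apply, smul_eq_mul] at hfv
  rw [Finset.sum_eq_zero_iff_of_nonneg fun i _ ↦ h_nonneg i] at hfv
  intro i hi
  by_contra hvi
  have h_zero := hfv i (Finsupp.mem_support_iff.mpr hvi)
  exact hi ⟨not_imp_comm.mp (hvJ i) hvi, (mul_eq_zero.mp h_zero).resolve_left hvi⟩

namespace IsGeometricForm

theorem mem_span_or_mem_span_compl (h : IsGeometricForm M B Δ)
    (hJ : ∀ i ∉ J, ∀ j ∈ J, B (Δ j) (Δ i) = 0) {ρ : E} (hρ : ρ ∈ Phi B Δ) :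
    ρ ∈ Submodule.span ℝ (Δ '' J) ∨ ρ ∈ Submodule.span ℝ (Δ '' Jᶜ) := by
  obtain ⟨w, i, rfl⟩ := h.mem_Phi_iff.mp hρ
  by_cases hi : i ∈ J
  · exact .inl (h.rep_mem_span_of_apply_eq_zero hJ w (Submodule.subset_span ⟨i, hi, rfl⟩))
  · refine .inr (h.rep_mem_span_of_apply_eq_zero (fun j hj k hk ↦ ?_) w
      (Submodule.subset_span ⟨i, hi, rfl⟩))
    rw [h.symm]
    exact hJ k hk j (Set.notMem_compl_iff.mp hj)

theorem abs_apply_le_one (h : IsGeometricForm M B Δ)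
    (hJ : ∀ v ∈ Submodule.span ℝ (Δ '' J), 0 ≤ B v v) {ρ σ : E} (hρ : ρ ∈ parabolicRoots B Δ J)
    (hσ : σ ∈ parabolicRoots B Δ J) : |B ρ σ| ≤ 1 := by
  have h_add := hJ _ (add_mem hρ.2 hσ.2)
  have h_sub := hJ _ (sub_mem hρ.2 hσ.2)
  simp only [map_add, map_sub, LinearMap.add_apply, LinearMap.sub_apply,
    h.apply_self_of_mem_Phi hρ.1, h.apply_self_of_mem_Phi hσ.1, h.symm σ ρ] at h_add h_sub
  rw [abs_le]
  constructor <;> linarith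

theorem rep_simple_rep_simple (h : IsGeometricForm M B Δ) (i : κ) (v : E) :
    h.rep (M.simple i) (h.rep (M.simple i) v) = v := by
  rw [← LinearEquiv.mul_apply, ← map_mul, ← CoxeterMatrix.toCoxeterSystem_simple,
    CoxeterSystem.simple_mul_simple_self, map_one, LinearEquiv.coe_one, id_eq]

theorem isAlmostPositive_comp_rep_simple (h : IsGeometricForm M B Δ) {f : E →ₗ[ℝ] ℝ}
    (hf : IsAlmostPositive B Δ J f) {i : κ} (hi : i ∈ J) :
    IsAlmostPositive B Δ J (f ∘ₗ h.rep (M.simple i)) := by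
  refine ((Set.finite_singleton (Δ i)).union (hf.image (h.rep (M.simple i)))).subset ?_
  rintro ρ ⟨hρ, hρJ, hfρ⟩
  refine or_iff_not_imp_left.mpr fun h_ne ↦ ⟨h.rep (M.simple i) ρ, ?_, h.rep_simple_rep_simple i ρ⟩
  exact ⟨h.rep_simple_mem_posPhi hρ h_ne, h.rep_simple_mem_span hi hρJ, hfρ⟩

theorem ncard_setOf_comp_rep_simple_neg_lt (h : IsGeometricForm M B Δ) {f : E →ₗ[ℝ] ℝ}
    (hf : IsAlmostPositive B Δ J f) {i : κ} (hi : i ∈ J) (hfi : f (Δ i) < 0) :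
    {ρ ∈ posPhi B Δ | ρ ∈ Submodule.span ℝ (Δ '' J) ∧ f (h.rep (M.simple i) ρ) < 0}.ncard <
      {ρ ∈ posPhi B Δ | ρ ∈ Submodule.span ℝ (Δ '' J) ∧ f ρ < 0}.ncard := by
  rw [← Set.ncard_image_of_injective _ (h.rep (M.simple i)).injective]
  refine Set.ncard_lt_ncard ((Set.ssubset_iff_of_subset ?_).mpr ?_)
    (hf.subset fun ρ hρ ↦ ⟨hρ.1, hρ.2.1, hρ.2.2.le⟩)
  · rintro _ ⟨ρ, ⟨hρ, hρJ, hfρ⟩, rfl⟩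
    refine ⟨h.rep_simple_mem_posPhi hρ ?_, h.rep_simple_mem_span hi hρJ, hfρ⟩
    rintro rfl
    rw [h.rep_simple_self, map_neg] at hfρ
    linarith
  · refine ⟨Δ i, ⟨basis_mem_posPhi B Δ i, Submodule.subset_span ⟨i, hi, rfl⟩, hfi⟩, ?_⟩
    rintro ⟨ρ, ⟨hρ, -⟩, h_eq⟩
    rw [← h.rep_simple_rep_simple i ρ, h_eq, h.rep_simple_self] at hρ
    exact h.neg_notMem_posPhi (basis_mem_posPhi B Δ i) hρ

theorem exists_isAlmostPositive_comp_rep_nonneg (h : IsGeometricForm M B Δ) {f : E →ₗ[ℝ] ℝ}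
    (hf : IsAlmostPositive B Δ J f) :
    ∃ w ∈ Subgroup.closure (M.simple '' J), IsAlmostPositive B Δ J (f ∘ₗ h.rep w) ∧
      ∀ i ∈ J, 0 ≤ f (h.rep w (Δ i)) := by
  induction hn : {ρ ∈ posPhi B Δ | ρ ∈ Submodule.span ℝ (Δ '' J) ∧ f ρ < 0}.ncard
    using Nat.strong_induction_on generalizing f with
  | _ n ih =>
    by_cases h_dom : ∀ i ∈ J, 0 ≤ f (Δ i)
    · exact ⟨1, one_mem _, by rwa [map_one], by rwa [map_one]⟩
    push Not at h_dom
    obtain ⟨i, hi, hfi⟩ := h_dom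
    obtain ⟨w, hw, h_pos, h_nonneg⟩ :=
      ih _ (hn ▸ h.ncard_setOf_comp_rep_simple_neg_lt hf hi hfi)
        (h.isAlmostPositive_comp_rep_simple hf hi) rfl
    refine ⟨M.simple i * w, mul_mem (Subgroup.subset_closure ⟨i, hi, rfl⟩) hw, ?_, ?_⟩
    · rwa [map_mul]
    · rwa [map_mul]

/-- The functional is `l1 Δ` minus its part in the nondegenerate plane spanned by `α` and `β`, which
is bounded on roots. -/
theorem exists_isAlmostPositive_apply_eq_zero [Finite κ] (h : IsGeometricForm M B Δ)
    (hJ : ∀ v ∈ Submodule.span ℝ (Δ '' J), 0 ≤ B v v) {α β : E} (hα : α ∈ parabolicRoots B Δ J)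
    (hβ : β ∈ parabolicRoots B Δ J) (hαβ : |B α β| < 1) :
    ∃ f, IsAlmostPositive B Δ J f ∧ f α = 0 ∧ f β = 0 := by
  cases nonempty_fintype κ
  have h_det : 1 - B α β ^ 2 ≠ 0 := (sub_pos.mpr ((sq_lt_one_iff_abs_lt_one _).mpr hαβ)).ne'
  let p := (l1 Δ α - B α β * l1 Δ β) / (1 - B α β ^ 2)
  let q := (l1 Δ β - B α β * l1 Δ α) / (1 - B α β ^ 2)
  have hf (v : E) : (Δ.sumCoords - p • B α - q • B β) v = l1 Δ v - p * B α v - q * B β v := by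
    rw [l1_eq_sumCoords]
    rfl
  have hαα := h.apply_self_of_mem_Phi hα.1
  have hββ := h.apply_self_of_mem_Phi hβ.1
  refine ⟨Δ.sumCoords - p • B α - q • B β, ?_, ?_, ?_⟩
  · refine (h.finite_setOf_mem_posPhi_l1_le (|p| + |q|)).subset fun ρ ⟨hρ, hρJ, hfρ⟩ ↦ ⟨hρ, ?_⟩
    have h_bound (c : ℝ) {γ : E} (hγ : γ ∈ parabolicRoots B Δ J) : c * B γ ρ ≤ |c| :=
      (le_abs_self _).trans <| (abs_mul c _).trans_le <|
        mul_le_of_le_one_right (abs_nonneg c) (h.abs_apply_le_one hJ hγ ⟨hρ.1, hρJ⟩)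
    rw [hf] at hfρ
    linarith [h_bound p hα, h_bound q hβ]
  · rw [hf, hαα, h.symm β α]
    simp only [p, q]
    field_simp
    ring
  · rw [hf, hββ]
    simp only [p, q]
    field_simp
    ring

theorem mem_parabolicRoots_setOf_apply_eq_zero (h : IsGeometricForm M B Δ) {f : E →ₗ[ℝ] ℝ}
    (hf : ∀ i ∈ J, 0 ≤ f (Δ i)) {ρ : E} (hρ : ρ ∈ parabolicRoots B Δ J) (hfρ : f ρ = 0) :
    ρ ∈ parabolicRoots B Δ {i ∈ J | f (Δ i) = 0} := by
  refine ⟨hρ.1, ?_⟩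
  obtain h_pos | h_neg := h.mem_posPhi_or_neg_mem_posPhi hρ.1
  · exact mem_span_setOf_apply_eq_zero hf h_pos.2 hρ.2 hfρ
  · rw [← neg_mem_iff]
    exact mem_span_setOf_apply_eq_zero hf h_neg.2 (neg_mem hρ.2) (by rw [map_neg, hfρ, neg_zero])

theorem finite_parabolicRoots_setOf_apply_eq_zero (h : IsGeometricForm M B Δ) {f : E →ₗ[ℝ] ℝ}
    (hf : IsAlmostPositive B Δ J f) : (parabolicRoots B Δ {i ∈ J | f (Δ i) = 0}).Finite := by
  have h_pos {ρ : E} (hρ : ρ ∈ posPhi B Δ)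
      (hρJ : ρ ∈ Submodule.span ℝ (Δ '' {i ∈ J | f (Δ i) = 0})) :
      ρ ∈ posPhi B Δ ∧ ρ ∈ Submodule.span ℝ (Δ '' J) ∧ f ρ ≤ 0 := by
    refine ⟨hρ, Submodule.span_mono (Set.image_mono fun i hi ↦ hi.1) hρJ, le_of_eq ?_⟩
    have h_ker : Submodule.span ℝ (Δ '' {i ∈ J | f (Δ i) = 0}) ≤ LinearMap.ker f :=
      Submodule.span_le.mpr (Set.forall_mem_image.mpr fun i hi ↦ hi.2)
    exact h_ker hρJ
  refine (hf.union (hf.image Neg.neg)).subset fun ρ hρ ↦ ?_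
  exact (h.mem_posPhi_or_neg_mem_posPhi hρ.1).imp (h_pos · hρ.2)
    fun h_neg ↦ ⟨-ρ, h_pos h_neg (neg_mem hρ.2), neg_neg ρ⟩

theorem exists_finite_parabolicRoots_apply_eq [Finite κ] (h : IsGeometricForm M B Δ)
    (hJ : ∀ v ∈ Submodule.span ℝ (Δ '' J), 0 ≤ B v v) {α β : E} (hα : α ∈ parabolicRoots B Δ J)
    (hβ : β ∈ parabolicRoots B Δ J) (hαβ : |B α β| < 1) :
    ∃ K, (parabolicRoots B Δ K).Finite ∧
      ∃ γ ∈ parabolicRoots B Δ K, ∃ δ ∈ parabolicRoots B Δ K, B γ δ = B α β := by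
  obtain ⟨f, hf, hfα, hfβ⟩ := h.exists_isAlmostPositive_apply_eq_zero hJ hα hβ hαβ
  obtain ⟨w, hw, h_pos, h_nonneg⟩ := h.exists_isAlmostPositive_comp_rep_nonneg hf
  have h_mem {ρ : E} (hρ : ρ ∈ parabolicRoots B Δ J) (hfρ : f ρ = 0) :
      h.rep w⁻¹ ρ ∈ parabolicRoots B Δ {i ∈ J | (f ∘ₗ h.rep w) (Δ i) = 0} := by
    refine h.mem_parabolicRoots_setOf_apply_eq_zero h_nonneg
      ⟨h.rep_mem_Phi _ hρ.1, h.rep_mem_span_of_mem_closure (inv_mem hw) hρ.2⟩ ?_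
    rwa [LinearMap.comp_apply, LinearEquiv.coe_coe, ← LinearEquiv.mul_apply, ← map_mul,
      mul_inv_cancel, map_one]
  exact ⟨_, h.finite_parabolicRoots_setOf_apply_eq_zero h_pos, _, h_mem hα hfα, _, h_mem hβ hfβ,
    h.apply_rep_rep _ _ _⟩

theorem finite_image2_parabolicRoots [Finite κ] (h : IsGeometricForm M B Δ)
    (hJ : ∀ v ∈ Submodule.span ℝ (Δ '' J), 0 ≤ B v v) :
    (Set.image2 (fun α β ↦ B α β) (parabolicRoots B Δ J) (parabolicRoots B Δ J)).Finite := by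
  have h_finite : (⋃ K ∈ {K | (parabolicRoots B Δ K).Finite},
      Set.image2 (fun α β ↦ B α β) (parabolicRoots B Δ K) (parabolicRoots B Δ K)).Finite :=
    (Set.toFinite _).biUnion fun K hK ↦ hK.image2 _ hK
  refine ((Set.toFinite {1, -1}).union h_finite).subset ?_
  rintro _ ⟨α, hα, β, hβ, rfl⟩
  obtain h_lt | h_eq := (h.abs_apply_le_one hJ hα hβ).lt_or_eq
  · obtain ⟨K, hK, γ, hγ, δ, hδ, h_eq⟩ := h.exists_finite_parabolicRoots_apply_eq hJ hα hβ h_lt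
    exact .inr (Set.mem_biUnion hK ⟨γ, hγ, δ, hδ, h_eq⟩)
  · exact .inl (eq_or_eq_neg_of_abs_eq h_eq)

theorem finite_image_parabolicRoots [Finite κ] (h : IsGeometricForm M B Δ)
    (hJ : ∀ v ∈ Submodule.span ℝ (Δ '' J), 0 ≤ B v v)
    (hJ' : ∀ i ∉ J, ∀ j ∈ J, B (Δ j) (Δ i) = 0) : (B '' parabolicRoots B Δ J).Finite := by
  have h_finite := (Set.Finite.pi' fun _ : κ ↦
    (h.finite_image2_parabolicRoots hJ).union (Set.finite_singleton 0)).preimage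
      (f := fun (φ : E →ₗ[ℝ] ℝ) i ↦ φ (Δ i)) fun φ _ ψ _ h_eq ↦ Δ.ext (congrFun h_eq)
  refine h_finite.subset (Set.image_subset_iff.mpr fun ρ hρ i ↦ ?_)
  by_cases hi : i ∈ J
  · exact .inl ⟨ρ, hρ, Δ i, ⟨basis_mem_Phi B Δ i, Submodule.subset_span ⟨i, hi, rfl⟩⟩, rfl⟩
  · exact .inr (apply_eq_zero_of_mem_span hJ' hρ.2 hi)

end IsGeometricForm

end ParabolicRoots

section LimitRoots

open Module

theorem exists_abs_le_one_add_mul_add_sq_eq_zero {b : ℝ} (hb : 1 ≤ |b|) :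
    ∃ t : ℝ, |t| ≤ 1 ∧ 1 + 2 * b * t + t ^ 2 = 0 := by
  obtain ⟨t, ht⟩ : ∃ t : ℝ, 1 * (t * t) + 2 * b * t + 1 = 0 := by
    refine exists_quadratic_eq_zero one_ne_zero ⟨√(discrim 1 (2 * b) 1), ?_⟩
    have := (one_le_sq_iff_one_le_abs b).mpr hb
    exact (Real.mul_self_sqrt (by rw [discrim]; linarith)).symm
  obtain h_le | h_lt := le_or_gt |t| 1
  · exact ⟨t, h_le, by linarith⟩
  -- The quadratic is palindromic, so its roots are inverse to each other.
  · have h_ne : t ≠ 0 := abs_pos.mp (one_pos.trans h_lt)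
    refine ⟨t⁻¹, abs_inv t ▸ inv_le_one_of_one_le₀ h_lt.le, ?_⟩
    field_simp
    linarith

variable {κ E : Type*} [Fintype κ] [NormedAddCommGroup E] [NormedSpace ℝ E]
variable {M : CoxeterMatrix κ} {B : LinearMap.BilinForm ℝ E} {Δ : Basis κ ℝ E}

theorem nrm_eq_self {v : E} (hv : l1 Δ v = 1) : nrm Δ v = v := by
  rw [nrm, hv, inv_one, one_smul]

theorem nrm_smul {c : ℝ} (hc : c ≠ 0) (v : E) : nrm Δ (c • v) = nrm Δ v := by
  rw [nrm, nrm, l1_smul, smul_smul, mul_inv_rev, inv_mul_cancel_right₀ hc]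

theorem l1_nrm {v : E} (hv : l1 Δ v ≠ 0) : l1 Δ (nrm Δ v) = 1 := by
  rw [nrm, l1_smul, inv_mul_cancel₀ hv]

theorem continuousAt_nrm {v : E} (hv : l1 Δ v ≠ 0) : ContinuousAt (nrm Δ) v :=
  ((continuous_l1 Δ).continuousAt.inv₀ hv).smul continuousAt_id

theorem tendsto_nrm_add {α : Type*} {l : Filter α} {ρ e : α → E} {x : E} (hx : l1 Δ x = 1)
    (hl : Tendsto (fun a ↦ l1 Δ (ρ a)) l atTop) (hρ : Tendsto (fun a ↦ nrm Δ (ρ a)) l (𝓝 x))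
    (he : l.IsBoundedUnder (· ≤ ·) (norm ∘ e)) :
    Tendsto (fun a ↦ nrm Δ (ρ a + e a)) l (𝓝 x) := by
  have h_add : Tendsto (fun a ↦ nrm Δ (ρ a) + (l1 Δ (ρ a))⁻¹ • e a) l (𝓝 x) :=
    add_zero x ▸ hρ.add (hl.inv_tendsto_atTop.zero_smul_isBoundedUnder_le he)
  have h_nrm := (continuousAt_nrm (Δ := Δ) (hx ▸ one_ne_zero)).tendsto.comp h_add
  rw [nrm_eq_self hx] at h_nrm
  refine h_nrm.congr' ?_
  filter_upwards [hl.eventually_gt_atTop 0] with a ha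
  rw [Function.comp_apply, nrm.eq_def Δ (ρ a), ← smul_add, nrm_smul (inv_ne_zero ha.ne')]

namespace IsGeometricForm

theorem nrm_add_smul_mem_E2circ (h : IsGeometricForm M B Δ) {ρ : E} (hρ : ρ ∈ posPhi B Δ)
    (hl : 1 < l1 Δ ρ) (i : κ) {t : ℝ} (ht : -1 ≤ t)
    (h_iso : B (ρ + t • Δ i) (ρ + t • Δ i) = 0) : nrm Δ (ρ + t • Δ i) ∈ E2circ B Δ := by
  have h_l1 : l1 Δ (ρ + t • Δ i) = l1 Δ ρ + t := by rw [l1_add, l1_smul, l1_basis, mul_one]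
  have h_ne : l1 Δ ρ + t ≠ 0 := by linarith
  have hρ_ne : l1 Δ ρ ≠ 0 := by linarith
  refine ⟨i, ρ, hρ, fun h_eq ↦ ?_, ⟨l1 Δ ρ / (l1 Δ ρ + t), ?_⟩, ?_, l1_nrm (h_l1 ▸ h_ne)⟩
  · have h_smul : ρ = l1 Δ ρ • Δ i := by rw [← h_eq, nrm, smul_inv_smul₀ hρ_ne]
    rw [h.eq_of_eq_smul hρ (basis_mem_posPhi B Δ i) h_smul, l1_basis] at hl
    exact lt_irrefl _ hl
  · rw [nrm, nrm, h_l1]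
    match_scalars <;> field_simp
    ring
  · rw [nrm, map_smul, LinearMap.map_smul₂, h_iso, smul_zero, smul_zero]

theorem exists_seq_tendsto_of_mem_Eset (h : IsGeometricForm M B Δ) {x : E} (hx : x ∈ Eset B Δ) :
    ∃ ρ : ℕ → E, (∀ n, ρ n ∈ posPhi B Δ) ∧ Tendsto (fun n ↦ l1 Δ (ρ n)) atTop atTop ∧
      Tendsto (fun n ↦ nrm Δ (ρ n)) atTop (𝓝 x) := by
  obtain ⟨y, hy, hy_mem⟩ := exists_seq_forall_of_frequently (accPt_iff_frequently_nhdsNE.mp hx)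
  choose ρ hρ hρy using hy_mem
  refine ⟨ρ, hρ, tendsto_atTop.mpr fun C ↦ ?_, ?_⟩
  · filter_upwards [(hy.mono_right (nhdsNE_le_cofinite x)).eventually
      ((h.finite_setOf_mem_posPhi_l1_le C).image (nrm Δ)).eventually_cofinite_notMem] with n hn
    exact le_of_not_ge fun hC ↦ hn ⟨ρ n, ⟨hρ n, hC⟩, hρy n⟩
  · simpa only [hρy] using hy.mono_right nhdsWithin_le_nhds

theorem repr_nonneg_of_mem_Eset (h : IsGeometricForm M B Δ) {x : E} (hx : x ∈ Eset B Δ) (i : κ) :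
    0 ≤ Δ.repr x i := by
  refine closure_minimal ?_ (isClosed_setOf_repr_nonneg Δ) (AccPt.clusterPt hx).mem_closure i
  rintro _ ⟨ρ, hρ, rfl⟩ j
  rw [nrm, map_smul, Finsupp.smul_apply, smul_eq_mul]
  exact mul_nonneg (inv_nonneg.mpr (h.l1_pos hρ).le) (hρ.2 j)

theorem l1_eq_one_of_mem_Eset (h : IsGeometricForm M B Δ) {x : E} (hx : x ∈ Eset B Δ) :
    l1 Δ x = 1 := by
  have h_closed : IsClosed {v | l1 Δ v = 1} := isClosed_eq (continuous_l1 Δ) continuous_const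
  refine closure_minimal ?_ h_closed (AccPt.clusterPt hx).mem_closure
  rintro _ ⟨ρ, hρ, rfl⟩
  exact l1_nrm (h.l1_pos hρ).ne'

theorem mem_closure_E2circ_of_apply_ne_zero (h : IsGeometricForm M B Δ) {x : E}
    (hx : x ∈ Eset B Δ) {i : κ} (hi : B x (Δ i) ≠ 0) : x ∈ closure (E2circ B Δ) := by
  have := Module.Finite.of_basis Δ
  obtain ⟨ρ, hρ, hl, h_tendsto⟩ := h.exists_seq_tendsto_of_mem_Eset hx
  have h_apply : Tendsto (fun n ↦ |B (ρ n) (Δ i)|) atTop atTop := by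
    have h_nrm : Tendsto (fun n ↦ |B (nrm Δ (ρ n)) (Δ i)|) atTop (𝓝 |B x (Δ i)|) :=
      ((B.flip (Δ i)).continuous_of_finiteDimensional.tendsto x |>.comp h_tendsto).abs
    refine (hl.atTop_mul_pos (abs_pos.mpr hi) h_nrm).congr fun n ↦ ?_
    have hn := h.l1_pos (hρ n)
    rw [nrm, LinearMap.map_smul₂, smul_eq_mul, abs_mul, abs_inv, abs_of_pos hn,
      mul_inv_cancel_left₀ hn.ne']
  choose! t ht using fun b : ℝ ↦ exists_abs_le_one_add_mul_add_sq_eq_zero (b := b)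
  have h_bdd : atTop.IsBoundedUnder (· ≤ ·) (norm ∘ fun n ↦ t (B (ρ n) (Δ i)) • Δ i) := by
    refine isBoundedUnder_of_eventually_le (a := ‖Δ i‖) ?_
    filter_upwards [h_apply.eventually_ge_atTop 1] with n hn
    exact (norm_smul _ _).trans_le (mul_le_of_le_one_left (norm_nonneg _) (ht _ hn).1)
  refine mem_closure_of_tendsto
    (tendsto_nrm_add (h.l1_eq_one_of_mem_Eset hx) hl h_tendsto h_bdd) ?_
  filter_upwards [h_apply.eventually_ge_atTop 1, hl.eventually_gt_atTop 1] with n hn hn'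
  refine h.nrm_add_smul_mem_E2circ (hρ n) hn' i (abs_le.mp (ht _ hn).1).1 ?_
  simp only [map_add, map_smul, LinearMap.add_apply, LinearMap.smul_apply, smul_eq_mul,
    h.apply_self_of_mem_Phi (hρ n).1, h.apply_self, h.symm (Δ i)]
  linarith [(ht _ hn).2]

theorem nrm_sub_mem_E2circ (h : IsGeometricForm M B Δ) {ρ σ : E} (hρ : ρ ∈ posPhi B Δ)
    (hσ : σ ∈ posPhi B Δ) (h_eq : B σ = B ρ) (h_lt : l1 Δ ρ < l1 Δ σ) :
    nrm Δ (σ - ρ) ∈ E2circ B Δ := by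
  have h_rad : B (σ - ρ) = 0 := by rw [map_sub, h_eq, sub_self]
  obtain ⟨w, j, rfl⟩ := h.mem_Phi_iff.mp hρ.1
  have h_root : σ - h.rep w (Δ j) + Δ j ∈ Phi B Δ := by
    have h_fix := h.rep_apply_eq_self_of_apply_eq_zero (d := σ - h.rep w (Δ j))
      (fun i ↦ by rw [h.symm, h_rad, LinearMap.zero_apply]) w⁻¹
    rw [map_sub, ← LinearEquiv.mul_apply, ← map_mul, inv_mul_cancel, map_one, LinearEquiv.coe_one,
      id_eq] at h_fix
    rw [← h_fix, sub_add_cancel]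
    exact h.rep_mem_Phi _ hσ.1
  have h_l1 : 1 < l1 Δ (σ - h.rep w (Δ j) + Δ j) := by
    rw [l1_add, l1_basis, sub_eq_add_neg, l1_add, l1_neg]
    linarith
  have h_cancel : σ - h.rep w (Δ j) = σ - h.rep w (Δ j) + Δ j + (-1 : ℝ) • Δ j := by
    rw [neg_one_smul, add_neg_cancel_right]
  rw [h_cancel]
  refine h.nrm_add_smul_mem_E2circ (h.mem_posPhi_of_l1_pos h_root (one_pos.trans h_l1)) h_l1 j
    le_rfl ?_
  rw [← h_cancel, h_rad, LinearMap.zero_apply]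

theorem exists_frequently_apply_eq_of_radical (h : IsGeometricForm M B Δ) {x : E} (hx_ne : x ≠ 0)
    (hx : ∀ i, 0 ≤ Δ.repr x i) (h_rad : B x = 0) {α : Type*} {l : Filter α} [l.NeBot] {ρ : α → E}
    (hρ : ∀ a, ρ a ∈ Phi B Δ) (h_tendsto : Tendsto (fun a ↦ nrm Δ (ρ a)) l (𝓝 x)) :
    ∃ φ, ∃ᶠ a in l, B (ρ a) = φ := by
  have := Module.Finite.of_basis Δ
  let J := {i | Δ.repr x i ≠ 0}
  have h_separated : ∀ i ∉ J, ∀ j ∈ J, B (Δ j) (Δ i) = 0 := fun i hi j hj ↦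
    h.apply_eq_zero_of_radical hx h_rad (not_not.mp hi) hj
  have h_finite : (B '' parabolicRoots B Δ J).Finite := h.finite_image_parabolicRoots
    (fun v ↦ h.apply_self_nonneg_of_radical hx h_rad) h_separated
  obtain ⟨i, hi⟩ : ∃ i, Δ.repr x i ≠ 0 := by
    by_contra! h_zero
    exact hx_ne (Δ.ext_elem fun i ↦ by rw [h_zero, map_zero, Finsupp.zero_apply])
  have h_mem : ∀ᶠ a in l, ∃ φ ∈ B '' parabolicRoots B Δ J, B (ρ a) = φ := by
    have h_coord := ((Δ.coord i).continuous_of_finiteDimensional.tendsto x).comp h_tendsto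
    filter_upwards [h_coord.eventually_ne hi] with a ha
    refine ⟨_, ⟨ρ a, ⟨hρ a, (h.mem_span_or_mem_span_compl h_separated (hρ a)).resolve_right
      fun h_compl ↦ ha ?_⟩, rfl⟩, rfl⟩
    rw [Function.comp_apply, nrm, map_smul, Basis.coord_apply,
      mem_span_basis_image_iff.mp h_compl i (Set.notMem_compl_iff.mpr hi), smul_zero]
  obtain ⟨φ, -, hφ⟩ := (frequently_exists_finite h_finite).mp h_mem.frequently
  exact ⟨φ, hφ⟩

theorem mem_closure_E2circ_of_apply_eq_zero (h : IsGeometricForm M B Δ) {x : E}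
    (hx : x ∈ Eset B Δ) (h_rad : B x = 0) : x ∈ closure (E2circ B Δ) := by
  obtain ⟨ρ, hρ, hl, h_tendsto⟩ := h.exists_seq_tendsto_of_mem_Eset hx
  have hx_l1 := h.l1_eq_one_of_mem_Eset hx
  have hx_ne : x ≠ 0 := by
    rintro rfl
    simp [l1] at hx_l1
  obtain ⟨φ, hφ⟩ := h.exists_frequently_apply_eq_of_radical hx_ne (h.repr_nonneg_of_mem_Eset hx)
    h_rad (fun n ↦ (hρ n).1) h_tendsto
  obtain ⟨m, hm⟩ := hφ.exists
  refine mem_closure_of_frequently_of_tendsto ?_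
    (tendsto_nrm_add hx_l1 hl h_tendsto (e := fun _ ↦ -ρ m) isBoundedUnder_const)
  refine (hφ.and_eventually (hl.eventually_gt_atTop (l1 Δ (ρ m)))).mono fun n ⟨hn, hmn⟩ ↦ ?_
  rw [← sub_eq_add_neg]
  exact h.nrm_sub_mem_E2circ (hρ m) (hρ n) (hn.trans hm.symm) hmn

end IsGeometricForm

end LimitRoots

/-- If `Φ` is infinite, then `E₂°` is dense in `E(Φ)`. -/
theorem statement16 (B : LinearMap.BilinForm ℝ V) (Δ : Module.Basis ι ℝ V)
    (hsymm : ∀ u v : V, B u v = B v u)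
    (hdiag : ∀ i : ι, B (Δ i) (Δ i) = 1)
    (hoff : ∀ i j : ι, i ≠ j → B (Δ i) (Δ j) ≤ -1 ∨
      ∃ k : ℕ, 2 ≤ k ∧ B (Δ i) (Δ j) = -Real.cos (Real.pi / (k : ℝ)))
    (hinf : (Phi B Δ).Infinite) :
    Eset B Δ ⊆ closure (E2circ B Δ) := by
  obtain ⟨M, h⟩ := exists_isGeometricForm hsymm hdiag hoff
  intro x hx
  by_cases h_rad : B x = 0
  · exact h.mem_closure_E2circ_of_apply_eq_zero hx h_rad
  · obtain ⟨i, hi⟩ : ∃ i, B x (Δ i) ≠ 0 := by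
      by_contra! h_zero
      exact h_rad (Δ.ext h_zero)
    exact h.mem_closure_E2circ_of_apply_ne_zero hx hi
end
end

section
/- Suppose Φ is infinite, (Φ,Δ) is irreducible, and B is not positive semidefinite (i.e., (Φ,Δ) is not affine). Then the radical V^⊥ = {v ∈ V : B(v,u) = 0 for all u ∈ V} intersects the cone cone(Δ) of nonnegative linear combinations of Δ only in {0}: V^⊥ ∩ cone(Δ) = {0}. -/
open Filter Topology

noncomputable section

variable {ι V : Type*} [Fintype ι] [NormedAddCommGroup V] [NormedSpace ℝ V]

/-!
Suppose a nonzero `v = ∑ cᵢ αᵢ` with all `cᵢ ≥ 0` lies in the radical. Pairing `v` with a simple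
root outside its support gives a sum of nonpositive terms equal to zero, so the support is
orthogonal to its complement, and irreducibility forces every `cᵢ` to be positive. Every vector is
then of the form `∑ yᵢ cᵢ αᵢ`, and on such vectors `B` is a weighted sum of squares `(yᵢ - yⱼ) ^ 2`
with weights `-cᵢ cⱼ B(αᵢ, αⱼ) / 2 ≥ 0` for `i ≠ j`, so `B` is positive semidefinite.
-/

section BilinForm

open LinearMap (BilinForm)

section SumOfSquares

variable {n R M : Type*} [CommRing R] [AddCommGroup M] [Module R M]
  {B : BilinForm R M} {s : Finset n} {w : n → M}

theorem sum_mul_apply_eq_zero_of_sum_mem_ker (hw : ∑ i ∈ s, w i ∈ LinearMap.ker B) (a : n → R) :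
    ∑ j ∈ s, ∑ i ∈ s, a j * B (w i) (w j) = 0 := by
  refine Finset.sum_eq_zero fun j _ => ?_
  rw [← Finset.mul_sum, ← BilinForm.sum_left, LinearMap.mem_ker.mp hw, LinearMap.zero_apply,
    mul_zero]

theorem two_mul_apply_sum_smul_self (hB : B.IsSymm) (hw : ∑ i ∈ s, w i ∈ LinearMap.ker B)
    (y : n → R) :
    2 * B (∑ i ∈ s, y i • w i) (∑ i ∈ s, y i • w i) =
      -∑ i ∈ s, ∑ j ∈ s, B (w i) (w j) * (y i - y j) ^ 2 := by
  have hcol := sum_mul_apply_eq_zero_of_sum_mem_ker hw fun j => y j ^ 2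
  have hrow : ∑ i ∈ s, ∑ j ∈ s, y i ^ 2 * B (w i) (w j) = 0 := by
    simpa only [hB.eq] using hcol
  rw [Finset.sum_comm] at hcol
  calc 2 * B (∑ i ∈ s, y i • w i) (∑ i ∈ s, y i • w i)
      = ∑ i ∈ s, ∑ j ∈ s, 2 * (y i * y j * B (w i) (w j)) := by
        simp_rw [BilinForm.sum_left, BilinForm.sum_right, BilinForm.smul_left,
          BilinForm.smul_right, Finset.mul_sum, mul_assoc]
    _ = ∑ i ∈ s, ∑ j ∈ s, (y i ^ 2 * B (w i) (w j) + y j ^ 2 * B (w i) (w j) -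
          B (w i) (w j) * (y i - y j) ^ 2) :=
        Finset.sum_congr rfl fun i _ => Finset.sum_congr rfl fun j _ => by ring
    _ = -∑ i ∈ s, ∑ j ∈ s, B (w i) (w j) * (y i - y j) ^ 2 := by
        simp only [Finset.sum_sub_distrib, Finset.sum_add_distrib, hrow, hcol, add_zero, zero_sub]

theorem apply_sum_smul_self_nonneg [LinearOrder R] [IsStrictOrderedRing R] (hB : B.IsSymm)
    (hw : ∑ i ∈ s, w i ∈ LinearMap.ker B)
    (hle : (s : Set n).Pairwise fun i j => B (w i) (w j) ≤ 0) (y : n → R) :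
    0 ≤ B (∑ i ∈ s, y i • w i) (∑ i ∈ s, y i • w i) := by
  refine nonneg_of_mul_nonneg_right ?_ (zero_lt_two (α := R))
  rw [two_mul_apply_sum_smul_self hB hw, neg_nonneg]
  refine Finset.sum_nonpos fun i hi => Finset.sum_nonpos fun j hj => ?_
  rcases eq_or_ne i j with rfl | hij
  · simp
  · exact mul_nonpos_of_nonpos_of_nonneg (hle hi hj hij) (sq_nonneg _)

end SumOfSquares

/-- Irreducibility of a family `e` with respect to a bilinear form `B`: its index set has no
nontrivial partition into two parts that `B` makes orthogonal. -/
def IsIrreducibleFamily {n R M : Type*} [CommSemiring R] [AddCommMonoid M] [Module R M]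
    (B : BilinForm R M) (e : n → M) : Prop :=
  ¬ ∃ I : Set n, I.Nonempty ∧ Iᶜ.Nonempty ∧ ∀ i ∈ I, ∀ j ∈ Iᶜ, B (e i) (e j) = 0

section Support

variable {n R M : Type*} [CommRing R] [LinearOrder R] [IsStrictOrderedRing R]
  [AddCommGroup M] [Module R M] {B : BilinForm R M} {b : Module.Basis n R M} {v : M}

theorem apply_basis_eq_zero_of_repr_pos_of_repr_eq_zero
    (hle : Pairwise fun i j => B (b i) (b j) ≤ 0) (hv : v ∈ LinearMap.ker B)
    (hpos : ∀ i, 0 ≤ b.repr v i) {i j : n} (hi : 0 < b.repr v i) (hj : b.repr v j = 0) :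
    B (b i) (b j) = 0 := by
  have hsum : ∑ l ∈ (b.repr v).support, b.repr v l * B (b l) (b j) = 0 := by
    calc ∑ l ∈ (b.repr v).support, b.repr v l * B (b l) (b j)
        = B (Finsupp.linearCombination R b (b.repr v)) (b j) := by
          simp only [Finsupp.linearCombination_apply, Finsupp.sum, BilinForm.sum_left,
            BilinForm.smul_left]
      _ = 0 := by rw [b.linearCombination_repr, LinearMap.mem_ker.mp hv, LinearMap.zero_apply]
  have hterm : ∀ l ∈ (b.repr v).support, b.repr v l * B (b l) (b j) ≤ 0 := by
    intro l hl
    have hlj : l ≠ j := by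
      rintro rfl
      exact Finsupp.mem_support_iff.mp hl hj
    exact mul_nonpos_of_nonneg_of_nonpos (hpos l) (hle hlj)
  have hi_term : b.repr v i * B (b i) (b j) = 0 :=
    (Finset.sum_eq_zero_iff_of_nonpos hterm).mp hsum i (Finsupp.mem_support_iff.mpr hi.ne')
  exact (mul_eq_zero.mp hi_term).resolve_left hi.ne'

theorem IsIrreducibleFamily.repr_pos (hirr : IsIrreducibleFamily B b)
    (hle : Pairwise fun i j => B (b i) (b j) ≤ 0) (hv : v ∈ LinearMap.ker B)
    (hpos : ∀ i, 0 ≤ b.repr v i) (hv0 : v ≠ 0) (i : n) : 0 < b.repr v i := by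
  by_contra hi
  obtain ⟨l, hl⟩ : ∃ l, b.repr v l ≠ 0 := by
    by_contra! hzero
    exact hv0 (b.ext_elem fun l => by simpa using hzero l)
  refine hirr ⟨{l | 0 < b.repr v l}, ⟨l, (hpos l).lt_of_ne' hl⟩, ⟨i, hi⟩, fun k hk j hj => ?_⟩
  exact apply_basis_eq_zero_of_repr_pos_of_repr_eq_zero hle hv hpos hk
    (le_antisymm (not_lt.mp hj) (hpos j))

end Support

section RadicalMeetsCone

variable {n K M : Type*} [Field K] [LinearOrder K] [IsStrictOrderedRing K]
  [AddCommGroup M] [Module K M] {B : BilinForm K M} {b : Module.Basis n K M}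

theorem apply_self_nonneg_of_mem_ker_of_repr_pos (hB : B.IsSymm)
    (hle : Pairwise fun i j => B (b i) (b j) ≤ 0) {v : M} (hv : v ∈ LinearMap.ker B)
    (hpos : ∀ i, 0 < b.repr v i) (u : M) : 0 ≤ B u u := by
  set c := b.repr v
  have sum_repr (x : M) : ∑ i ∈ c.support, b.repr x i • b i = x := by
    rw [← Finsupp.linearCombination_apply_of_mem_supported, b.linearCombination_repr]
    exact fun i _ => Finsupp.mem_support_iff.mpr (hpos i).ne'
  have hu : ∑ i ∈ c.support, (b.repr u i / c i) • c i • b i = u := by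
    simpa only [smul_smul, div_mul_cancel₀ _ (hpos _).ne'] using sum_repr u
  have hle_smul : Pairwise fun i j => B (c i • b i) (c j • b j) ≤ 0 := by
    intro i j hij
    rw [BilinForm.smul_left, BilinForm.smul_right, ← mul_assoc]
    exact mul_nonpos_of_nonneg_of_nonpos (mul_pos (hpos i) (hpos j)).le (hle hij)
  rw [← hu]
  exact apply_sum_smul_self_nonneg hB (by rwa [sum_repr v]) (hle_smul.set_pairwise _) _

theorem statement18_general (hB : B.IsSymm) (hle : Pairwise fun i j => B (b i) (b j) ≤ 0)
    (hirr : IsIrreducibleFamily B b) (hnpsd : ¬ ∀ v, 0 ≤ B v v) :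
    {v : M | (∀ u, B v u = 0) ∧ ∀ i, 0 ≤ b.repr v i} = {0} := by
  refine Set.eq_singleton_iff_unique_mem.mpr ⟨by simp, fun v ⟨hrad, hpos⟩ => ?_⟩
  have hv : v ∈ LinearMap.ker B := LinearMap.ext hrad
  by_contra hv0
  exact hnpsd (apply_self_nonneg_of_mem_ker_of_repr_pos hB hle hv (hirr.repr_pos hle hv hpos hv0))

end RadicalMeetsCone

end BilinForm

theorem neg_cos_pi_div_natCast_nonpos {k : ℕ} (hk : 2 ≤ k) : -Real.cos (Real.pi / k) ≤ 0 := by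
  have hk' : (2 : ℝ) ≤ k := by exact_mod_cast hk
  have hnonneg : 0 ≤ Real.pi / k := by positivity
  rw [neg_nonpos]
  refine Real.cos_nonneg_of_neg_pi_div_two_le_of_le (by linarith [Real.pi_pos]) ?_
  gcongr

theorem nonpos_of_le_neg_one_or_eq_neg_cos {x : ℝ}
    (hx : x ≤ -1 ∨ ∃ k : ℕ, 2 ≤ k ∧ x = -Real.cos (Real.pi / (k : ℝ))) : x ≤ 0 := by
  rcases hx with hx | ⟨k, hk, rfl⟩
  · exact hx.trans (by norm_num)
  · exact neg_cos_pi_div_natCast_nonpos hk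

/-- If `Φ` is infinite, `(Φ,Δ)` is irreducible and `B` is not positive semidefinite,
then the radical of `B` meets `cone(Δ)` only in `0`. -/
theorem statement18 (B : LinearMap.BilinForm ℝ V) (Δ : Module.Basis ι ℝ V)
    (hsymm : ∀ u v : V, B u v = B v u)
    (hdiag : ∀ i : ι, B (Δ i) (Δ i) = 1)
    (hoff : ∀ i j : ι, i ≠ j → B (Δ i) (Δ j) ≤ -1 ∨
      ∃ k : ℕ, 2 ≤ k ∧ B (Δ i) (Δ j) = -Real.cos (Real.pi / (k : ℝ)))
    (hinf : (Phi B Δ).Infinite)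
    (hirr : ¬ ∃ I : Set ι, I.Nonempty ∧ Iᶜ.Nonempty ∧ ∀ i ∈ I, ∀ j ∈ Iᶜ, B (Δ i) (Δ j) = 0)
    (hnpsd : ¬ ∀ v : V, 0 ≤ B v v) :
    { v : V | (∀ u : V, B v u = 0) ∧ ∀ i : ι, 0 ≤ Δ.repr v i } = {0} :=
  statement18_general ⟨hsymm⟩ (fun i j hij => nonpos_of_le_neg_one_or_eq_neg_cos (hoff i j hij))
    hirr hnpsd
end
end

section
/- Let (W,S) be a Coxeter system with S finite, and let T = {wsw⁻¹ : w ∈ W, s ∈ S} be its set of reflections. If for all t, t' ∈ T the subgroup of W generated by {t, t'} is finite (equivalently, every product tt' of two reflections has finite order), then W is finite. -/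
/-!
Let `W` act on `V = B →₀ ℝ` by the geometric representation, preserving the form `b` with
`b(eᵢ, eⱼ) = -2 cos (π / mᵢⱼ)`. If the product of the reflections in two roots `α`, `β` has finite
order `n`, then `C₂ₙ(-b(α, β)) = 2` for the rescaled Chebyshev polynomial `C₂ₙ`; hence `b(α, β)` and
all its conjugates have the form `2 cos (q π)` with `q` rational. The numbers `b(eₖ, α)` lie in the
number field generated by the `b(eᵢ, eⱼ)`, which contains only finitely many algebraic integers all
of whose conjugates are bounded by `2`. Moreover `b(α, β) = 2` forces `α = β`, as otherwise the
product of the two reflections would be a nontrivial shear. So a root is determined by its pairings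
with the simple roots, there are finitely many roots, and `W` is finite because it acts faithfully
on them.
-/

open Polynomial.Chebyshev CoxeterSystem

lemma isOfFinOrder_mul_of_finite_closure_pair {G : Type*} [Group G] {a b : G}
    (h : (Subgroup.closure {a, b} : Set G).Finite) : IsOfFinOrder (a * b) := by
  have : Finite (Subgroup.closure {a, b}) := h
  have hab : a * b ∈ Subgroup.closure {a, b} :=
    mul_mem (Subgroup.subset_closure (by simp)) (Subgroup.subset_closure (by simp))
  exact (Subgroup.closure {a, b}).subtype.isOfFinOrder (isOfFinOrder_of_finite ⟨a * b, hab⟩)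

section ReflectionPairs

variable {R V : Type*} [CommRing R] [AddCommGroup V] [Module R V] {x y : V}
  {f g : Module.Dual R V} {c : R} (hf : f x = 2) (hg : g y = 2)

lemma reflection_mul_reflection_pow_apply_left (hfy : f y = -c) (hgx : g x = -c) (k : ℕ) :
    ((Module.reflection hf * Module.reflection hg) ^ k) x =
      (S R (2 * k)).eval c • x + (S R (2 * k - 1)).eval c • y := by
  induction k with
  | zero => simp
  | succ k ih =>
    have h_odd : (S R (2 * k + 1)).eval c =
        c * (S R (2 * k)).eval c - (S R (2 * k - 1)).eval c := by
      simp [S_add_one]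
    have h_even : (S R (2 * k + 2)).eval c =
        c * (S R (2 * k + 1)).eval c - (S R (2 * k)).eval c := by
      simp [S_add_two]
    rw [pow_succ', LinearEquiv.mul_apply, ih, LinearEquiv.mul_apply]
    simp only [Module.reflection_apply, map_add, map_sub, map_smul, hf, hg, hfy, hgx]
    push_cast
    rw [show (2 * (k + 1) : ℤ) = 2 * k + 2 by ring, show (2 * k + 2 - 1 : ℤ) = 2 * k + 1 by ring,
      h_even, h_odd]
    module

lemma reflection_mul_reflection_mul_reflection_pow_apply_left (hfy : f y = -c) (hgx : g x = -c)
    (k : ℕ) :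
    Module.reflection hg (((Module.reflection hf * Module.reflection hg) ^ k) x) =
      (S R (2 * k)).eval c • x + (S R (2 * k + 1)).eval c • y := by
  rw [reflection_mul_reflection_pow_apply_left hf hg hfy hgx, S_add_one]
  simp only [Module.reflection_apply, map_add, map_smul, hg, hgx,
    Polynomial.eval_sub, Polynomial.eval_mul, Polynomial.eval_X]
  module

lemma eval_C_eq_two_of_reflection_mul_reflection_pow_eq_one (hfy : f y = -c) (hgx : g x = -c)
    {n : ℕ} (hn : (Module.reflection hf * Module.reflection hg) ^ n = 1) :
    (C R (2 * n)).eval c = 2 := by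
  have h := congrArg f (reflection_mul_reflection_pow_apply_left hf hg hfy hgx n)
  simp only [hn, LinearEquiv.coe_one, id_eq, map_add, map_smul, hf, hfy, smul_eq_mul] at h
  simp only [C_eq_S_sub_X_mul_S, Polynomial.eval_sub, Polynomial.eval_mul, Polynomial.eval_X,
    Polynomial.eval_ofNat]
  linear_combination -h

lemma eq_of_isOfFinOrder_reflection_mul_reflection [IsAddTorsionFree V] (hfy : f y = 2)
    (hgx : g x = 2) (hfin : IsOfFinOrder (Module.reflection hf * Module.reflection hg)) :
    x = y := by
  obtain ⟨n, hn, hpow⟩ := isOfFinOrder_iff_pow_eq_one.mp hfin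
  have hshear := Module.reflection_reflection_iterate hf hg (by rw [hfy, hgx]; norm_num) n
  rw [show (Module.reflection hg).trans (Module.reflection hf) =
      Module.reflection hf * Module.reflection hg from rfl, ← LinearEquiv.coe_pow, hpow,
    LinearEquiv.coe_one, id_eq, left_eq_add, smul_eq_zero_iff_right hn.ne', hfy, sub_eq_zero]
    at hshear
  exact smul_right_injective V two_ne_zero (by simpa only [two_smul] using hshear)

end ReflectionPairs

lemma reflection_mul_reflection_pow_eq_one_s19 {F V : Type*} [Field F] [AddCommGroup V] [Module F V]
    {x y : V} {f g : Module.Dual F V} {c : F} (hf : f x = 2) (hg : g y = 2)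
    (hfy : f y = -c) (hgx : g x = -c) (hc : c ^ 2 ≠ 4) {m : ℕ}
    (h_even : (S F (2 * m)).eval c = 1) (h_odd : (S F (2 * m - 1)).eval c = 0) :
    (Module.reflection hf * Module.reflection hg) ^ m = 1 := by
  set r := Module.reflection hf * Module.reflection hg with hr
  have hx : (r ^ m) x = x := by
    simp [hr, reflection_mul_reflection_pow_apply_left hf hg hfy hgx, h_even, h_odd]
  have hy : (r ^ m) y = y := by
    have hinv : r⁻¹ = Module.reflection hg * Module.reflection hf := by simp [hr]
    have : (r⁻¹ ^ m) y = y := by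
      simp [hinv, reflection_mul_reflection_pow_apply_left hg hf hgx hfy, h_even, h_odd]
    rw [inv_pow] at this
    conv_lhs => rw [← this]
    rw [← LinearEquiv.mul_apply, mul_inv_cancel, LinearEquiv.coe_one, id_eq]
  have hfix {u : V} (hfu : f u = 0) (hgu : g u = 0) : (r ^ m) u = u := by
    have hru : r u = u := by simp [hr, LinearEquiv.mul_apply, Module.reflection_apply, hfu, hgu]
    rw [LinearEquiv.coe_pow]
    exact Function.iterate_fixed hru m
  ext z
  have hd : 4 - c ^ 2 ≠ 0 := sub_ne_zero.mpr hc.symm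
  -- `a • x + b • y` is the component of `z` in the plane spanned by `x` and `y`.
  set a := (2 * f z + c * g z) / (4 - c ^ 2) with ha
  set b := (2 * g z + c * f z) / (4 - c ^ 2) with hb
  have hfu : f (z - a • x - b • y) = 0 := by
    simp only [map_sub, map_smul, hf, hfy, smul_eq_mul, ha, hb]
    field_simp
    ring
  have hgu : g (z - a • x - b • y) = 0 := by
    simp only [map_sub, map_smul, hg, hgx, smul_eq_mul, ha, hb]
    field_simp
    ring
  have hz := hfix hfu hgu
  simp only [map_sub, map_smul, hx, hy] at hz
  simpa using hz

section Chebyshev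

open Real

lemma sin_pi_div_pos_s19 {m : ℕ} (hm : 2 ≤ m) : 0 < sin (π / m) := by
  have : (2 : ℝ) ≤ m := by exact_mod_cast hm
  apply sin_pos_of_pos_of_lt_pi (by positivity)
  exact div_lt_self pi_pos (by linarith)

lemma eval_S_two_mul_cos_pi_div_nonneg {m : ℕ} (hm : m ≠ 1) {k : ℤ} (hk : -1 ≤ k)
    (hkm : m ≠ 0 → k < m) : 0 ≤ (S ℝ k).eval (2 * cos (π / m)) := by
  have hk' : (0 : ℝ) ≤ k + 1 := by exact_mod_cast (by lia : 0 ≤ k + 1)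
  rcases eq_or_ne m 0 with rfl | hm0
  · simpa using hk'
  · have hkm' : (k + 1 : ℝ) ≤ m := by exact_mod_cast (by lia : k + 1 ≤ m)
    have hsin : 0 ≤ sin ((k + 1) * (π / m)) := by
      apply sin_nonneg_of_nonneg_of_le_pi (by positivity)
      calc (k + 1) * (π / m) ≤ m * (π / m) := by gcongr
        _ = π := by field_simp
    rw [← S_two_mul_real_cos] at hsin
    exact nonneg_of_mul_nonneg_left hsin (sin_pi_div_pos_s19 (by lia))

lemma eval_S_two_mul_two_mul_cos_pi_div {m : ℕ} (hm : 2 ≤ m) :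
    (S ℝ (2 * m)).eval (2 * cos (π / m)) = 1 := by
  apply mul_right_cancel₀ (sin_pi_div_pos_s19 hm).ne'
  rw [S_two_mul_real_cos, one_mul, ← sin_add_two_pi (π / m)]
  congr 1
  push_cast
  field_simp
  ring

lemma eval_S_two_mul_sub_one_two_mul_cos_pi_div {m : ℕ} (hm : 2 ≤ m) :
    (S ℝ (2 * m - 1)).eval (2 * cos (π / m)) = 0 := by
  apply mul_right_cancel₀ (sin_pi_div_pos_s19 hm).ne'
  rw [S_two_mul_real_cos, zero_mul, ← sin_two_pi]
  congr 1
  push_cast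
  field_simp
  ring

lemma sq_two_mul_cos_pi_div_ne_four {m : ℕ} (hm : 2 ≤ m) : (2 * cos (π / m)) ^ 2 ≠ 4 := by
  have := sin_sq_add_cos_sq (π / m)
  have := pow_pos (sin_pi_div_pos_s19 hm) 2
  intro h
  linarith

lemma exists_rat_two_mul_cos_of_eval_C_eq_two {n : ℤ} (hn : n ≠ 0) {z : ℂ}
    (hz : (C ℂ n).eval z = 2) : ∃ q : ℚ, z = 2 * Complex.cos (q * π) := by
  obtain ⟨θ, hθ⟩ := Complex.cos_surjective (z / 2)
  obtain rfl : z = 2 * Complex.cos θ := by rw [hθ]; ring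
  rw [C_two_mul_complex_cos, mul_eq_left₀ two_ne_zero, Complex.cos_eq_one_iff] at hz
  obtain ⟨k, hk⟩ := hz
  refine ⟨2 * k / n, ?_⟩
  congr 2
  push_cast
  field_simp
  linear_combination -hk

lemma finite_setOf_eval_C_eq_two (K : Type*) [Field K] [NumberField K] :
    {x : K | ∃ n : ℤ, n ≠ 0 ∧ (C K n).eval x = 2}.Finite := by
  refine (NumberField.Embeddings.finite_of_norm_le K ℂ 2).subset ?_
  rintro x ⟨n, hn, hx⟩
  have hcos (φ : K →+* ℂ) : ∃ q : ℚ, φ x = 2 * Complex.cos (q * π) := by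
    apply exists_rat_two_mul_cos_of_eval_C_eq_two hn
    rw [← map_C φ, Polynomial.eval_map_apply, hx, map_ofNat]
  refine ⟨?_, fun φ => ?_⟩
  · let φ : K →+* ℂ := Classical.arbitrary _
    obtain ⟨q, hq⟩ := hcos φ
    apply (isIntegral_algHom_iff φ.toIntAlgHom φ.injective).mp
    simpa [hq] using Complex.isIntegral_two_mul_cos_rat_mul_pi q
  · obtain ⟨q, hq⟩ := hcos φ
    have : Complex.cos (q * π) = (cos (q * π) : ℝ) := by push_cast; rfl
    rw [hq, this, norm_mul, Complex.norm_real, Complex.norm_ofNat, norm_eq_abs]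
    linarith [abs_cos_le_one (q * π)]

end Chebyshev

section GeometricRepresentation

open Real

variable {B : Type*} (M : CoxeterMatrix B)

/-- The simple root `eᵢ` of the geometric representation: the `i`-th standard basis vector. -/
noncomputable def simpleRoot (i : B) : B →₀ ℝ := Finsupp.single i 1

/-- The bilinear form of the geometric representation, normalized so that roots have square `2`.
The encoding of `m = ∞` as `m = 0` needs no special treatment: `π / 0 = 0` gives the value `-2`. -/
noncomputable def coxeterForm : LinearMap.BilinForm ℝ (B →₀ ℝ) :=
  Finsupp.linearCombination ℝ fun i =>
    Finsupp.linearCombination ℝ fun j => -(2 * cos (π / M i j))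

lemma coxeterForm_simpleRoot (i j : B) :
    coxeterForm M (simpleRoot i) (simpleRoot j) = -(2 * cos (π / M i j)) := by
  simp [coxeterForm, simpleRoot]

lemma coxeterForm_simpleRoot_self (i : B) :
    coxeterForm M (simpleRoot i) (simpleRoot i) = 2 := by
  simp [coxeterForm_simpleRoot]

lemma coxeterForm_congr_right {α β : B →₀ ℝ}
    (h : ∀ k, coxeterForm M (simpleRoot k) α = coxeterForm M (simpleRoot k) β) (v : B →₀ ℝ) :
    coxeterForm M v α = coxeterForm M v β := by
  suffices (coxeterForm M).flip α = (coxeterForm M).flip β from congrArg (· v) this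
  ext k
  exact h k

lemma coxeterForm_isSymm : (coxeterForm M).IsSymm := by
  refine ⟨fun u v => ?_⟩
  suffices coxeterForm M = (coxeterForm M).flip from congrArg (· u v) this
  ext i j
  change coxeterForm M (simpleRoot i) (simpleRoot j) = coxeterForm M (simpleRoot j) (simpleRoot i)
  simp only [coxeterForm_simpleRoot, M.symmetric i j]

/-- The action of the simple generator `sᵢ` in the geometric representation. -/
noncomputable def simpleReflection (i : B) : (B →₀ ℝ) ≃ₗ[ℝ] (B →₀ ℝ) :=
  Module.reflection (coxeterForm_simpleRoot_self M i)

lemma simpleReflection_apply (i : B) (v : B →₀ ℝ) :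
    simpleReflection M i v = v - coxeterForm M (simpleRoot i) v • simpleRoot i :=
  Module.reflection_apply _ _

lemma coxeterForm_simpleReflection (i : B) (u v : B →₀ ℝ) :
    coxeterForm M (simpleReflection M i u) (simpleReflection M i v) = coxeterForm M u v := by
  simp only [simpleReflection_apply, map_sub, map_smul, LinearMap.sub_apply, LinearMap.smul_apply,
    smul_eq_mul, coxeterForm_simpleRoot_self, (coxeterForm_isSymm M).eq u (simpleRoot i)]
  ring

lemma simpleReflection_isLiftable : M.IsLiftable (simpleReflection M) := by
  intro i j
  rcases eq_or_ne i j with rfl | hij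
  · rw [M.diagonal, pow_one]
    ext1 v
    exact Module.involutive_reflection (coxeterForm_simpleRoot_self M i) v
  rcases eq_or_ne (M i j) 0 with h0 | h0
  · rw [h0, pow_zero]
  have hm : 2 ≤ M i j := by have := M.off_diagonal i j hij; lia
  exact reflection_mul_reflection_pow_eq_one_s19 _ _ (coxeterForm_simpleRoot M i j)
    (by rw [coxeterForm_simpleRoot, M.symmetric]) (sq_two_mul_cos_pi_div_ne_four hm)
    (eval_S_two_mul_two_mul_cos_pi_div hm) (eval_S_two_mul_sub_one_two_mul_cos_pi_div hm)

variable {M} {W : Type*} [Group W] (cs : CoxeterSystem M W)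

/-- The geometric (Tits) representation of a Coxeter group. -/
noncomputable def geometricRep : W →* ((B →₀ ℝ) ≃ₗ[ℝ] (B →₀ ℝ)) :=
  cs.lift ⟨simpleReflection M, simpleReflection_isLiftable M⟩

lemma geometricRep_simple (i : B) : geometricRep cs (cs.simple i) = simpleReflection M i :=
  cs.lift_apply_simple _ _

lemma coxeterForm_geometricRep (w : W) (u v : B →₀ ℝ) :
    coxeterForm M (geometricRep cs w u) (geometricRep cs w v) = coxeterForm M u v := by
  induction w using cs.simple_induction_left with
  | one => simp
  | mul_simple_left w i ih =>
    simp only [map_mul, LinearEquiv.mul_apply, geometricRep_simple, coxeterForm_simpleReflection,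
      ih]

lemma geometricRep_alternatingWord_simpleRoot_nonneg_combination {i j : B} (hij : i ≠ j) {k : ℕ}
    (hk : M i j ≠ 0 → k < M i j) :
    ∃ a b : ℝ, 0 ≤ a ∧ 0 ≤ b ∧
      geometricRep cs (cs.wordProd (alternatingWord i j k)) (simpleRoot i) =
        a • simpleRoot i + b • simpleRoot j := by
  have hS {l : ℤ} (hl : -1 ≤ l) (hlk : l ≤ k) : 0 ≤ (S ℝ l).eval (2 * cos (π / M i j)) :=
    eval_S_two_mul_cos_pi_div_nonneg (M.off_diagonal i j hij) hl (by lia)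
  have hji : coxeterForm M (simpleRoot j) (simpleRoot i) = -(2 * cos (π / M i j)) := by
    rw [coxeterForm_simpleRoot, M.symmetric]
  rw [cs.prod_alternatingWord_eq_mul_pow, map_mul, map_pow, map_mul, LinearEquiv.mul_apply,
    geometricRep_simple, geometricRep_simple]
  rcases Nat.even_or_odd' k with ⟨l, rfl | rfl⟩
  · refine ⟨_, _, hS (l := 2 * l) (by lia) (by lia), hS (l := 2 * l - 1) (by lia) (by lia), ?_⟩
    rw [if_pos (even_two_mul l), map_one, Nat.mul_div_cancel_left l two_pos]
    exact reflection_mul_reflection_pow_apply_left _ _ (coxeterForm_simpleRoot M i j) hji l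
  · refine ⟨_, _, hS (l := 2 * l) (by lia) (by lia), hS (l := 2 * l + 1) (by lia) (by lia), ?_⟩
    rw [if_neg (Nat.not_even_two_mul_add_one l), geometricRep_simple,
      show (2 * l + 1) / 2 = l by lia]
    exact reflection_mul_reflection_mul_reflection_pow_apply_left _ _
      (coxeterForm_simpleRoot M i j) hji l

lemma exists_eq_mul_alternatingWord (w : W) {i j : B} (hi : ¬ cs.IsRightDescent w i) :
    ∃ (v : W) (k : ℕ), w = v * cs.wordProd (alternatingWord i j k) ∧
      cs.length w = cs.length v + k ∧ ¬ cs.IsRightDescent v i ∧ ¬ cs.IsRightDescent v j := by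
  classical
  -- Split off the longest possible alternating suffix.
  let IsSuffixLength (k : ℕ) : Prop :=
    ∃ v, w = v * cs.wordProd (alternatingWord i j k) ∧ cs.length w = cs.length v + k
  have hzero : IsSuffixLength 0 := ⟨w, by simp [alternatingWord], by simp⟩
  obtain ⟨k, ⟨v, hw, hlen⟩, hmax⟩ : ∃ k, IsSuffixLength k ∧ ¬ IsSuffixLength (k + 1) := by
    by_contra! hstep
    have hall (k : ℕ) : IsSuffixLength k := Nat.rec hzero hstep k
    obtain ⟨v, -, hlen⟩ := hall (cs.length w + 1)
    lia
  have hnext : ¬ cs.IsRightDescent v (if Even k then j else i) := by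
    intro hdesc
    rw [cs.isRightDescent_iff] at hdesc
    refine hmax ⟨v * cs.simple (if Even k then j else i), ?_, by lia⟩
    rw [alternatingWord_succ', cs.wordProd_cons, ← mul_assoc, cs.simple_mul_simple_cancel_right, hw]
  have hfirst : ¬ cs.IsRightDescent v (if Even k then i else j) := by
    rcases k with _ | l
    · simpa [hw, alternatingWord] using hi
    intro hdesc
    rw [cs.isRightDescent_iff] at hdesc
    rw [alternatingWord_succ', cs.wordProd_cons, ← mul_assoc] at hw
    have hle := cs.length_mul_le (v * cs.simple (if Even l then j else i))
      (cs.wordProd (alternatingWord i j l))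
    have hword := cs.length_wordProd_le (alternatingWord i j l)
    rw [length_alternatingWord] at hword
    rw [← hw] at hle
    simp only [Nat.even_add_one, ite_not] at hdesc
    lia
  refine ⟨v, k, hw, hlen, ?_, ?_⟩ <;> by_cases hk : Even k <;> simp_all

lemma lt_of_length_eq_length_add_alternatingWord {v w : W} {i j : B} {k : ℕ}
    (hi : ¬ cs.IsRightDescent w i) (hw : w = v * cs.wordProd (alternatingWord i j k))
    (hlen : cs.length w = cs.length v + k) (hM : M i j ≠ 0) : k < M i j := by
  by_contra! hk
  have hmul : w * cs.simple i = v * cs.wordProd (alternatingWord j i (k + 1)) := by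
    rw [alternatingWord_succ, cs.wordProd_concat, hw, mul_assoc]
  have hnot_reduced := cs.not_isReduced_alternatingWord j i (m := k + 1)
    (by rwa [M.symmetric]) (by rw [M.symmetric]; lia)
  have hword := cs.length_wordProd_le (alternatingWord j i (k + 1))
  have hle := cs.length_mul_le v (cs.wordProd (alternatingWord j i (k + 1)))
  rw [CoxeterSystem.IsReduced, length_alternatingWord] at hnot_reduced
  rw [length_alternatingWord] at hword
  rw [← hmul] at hle
  rw [cs.not_isRightDescent_iff] at hi
  lia

lemma geometricRep_simpleRoot_nonneg {w : W} {i : B} (hi : ¬ cs.IsRightDescent w i) :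
    0 ≤ geometricRep cs w (simpleRoot i) := by
  induction hn : cs.length w using Nat.strong_induction_on generalizing w i with
  | _ n ih =>
    rcases eq_or_ne w 1 with rfl | hw1
    · simp [simpleRoot]
    obtain ⟨j, hj⟩ := cs.exists_rightDescent_of_ne_one hw1
    have hij : i ≠ j := by rintro rfl; exact hi hj
    obtain ⟨v, k, hw, hlen, hvi, hvj⟩ := exists_eq_mul_alternatingWord cs w (j := j) hi
    have hvw : cs.length v < n := by
      have hk : k ≠ 0 := by
        rintro rfl
        simp only [alternatingWord, cs.wordProd_nil, mul_one] at hw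
        exact hvj (hw ▸ hj)
      lia
    obtain ⟨a, b, ha, hb, hab⟩ :=
      geometricRep_alternatingWord_simpleRoot_nonneg_combination cs hij
        (lt_of_length_eq_length_add_alternatingWord cs hi hw hlen)
    rw [hw, map_mul, LinearEquiv.mul_apply, hab, map_add, map_smul, map_smul]
    exact add_nonneg (smul_nonneg ha (ih _ hvw hvi rfl)) (smul_nonneg hb (ih _ hvw hvj rfl))

lemma geometricRep_injective : Function.Injective (geometricRep cs) := by
  rw [injective_iff_map_eq_one]
  intro w hw
  by_contra hw1
  obtain ⟨i, hi⟩ := cs.exists_rightDescent_of_ne_one hw1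
  have hneg : geometricRep cs (w * cs.simple i) (simpleRoot i) = -simpleRoot i := by
    rw [map_mul, hw, one_mul, geometricRep_simple]
    exact Module.reflection_apply_self _
  have hnonneg := geometricRep_simpleRoot_nonneg cs
    (cs.isRightDescent_iff_not_isRightDescent_mul.mp hi) i
  rw [hneg] at hnonneg
  norm_num [simpleRoot] at hnonneg

lemma coxeterForm_geometricRep_simpleRoot_self (w : W) (i : B) :
    coxeterForm M (geometricRep cs w (simpleRoot i)) (geometricRep cs w (simpleRoot i)) = 2 := by
  rw [coxeterForm_geometricRep, coxeterForm_simpleRoot_self]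

lemma geometricRep_conj_simple (w : W) (i : B) :
    geometricRep cs (w * cs.simple i * w⁻¹) =
      Module.reflection (coxeterForm_geometricRep_simpleRoot_self cs w i) := by
  ext1 v
  have hinv : geometricRep cs w (geometricRep cs w⁻¹ v) = v := by
    rw [← LinearEquiv.mul_apply, ← map_mul, mul_inv_cancel, map_one, LinearEquiv.coe_one, id_eq]
  rw [map_mul, map_mul, LinearEquiv.mul_apply, LinearEquiv.mul_apply, geometricRep_simple,
    simpleReflection_apply, map_sub, map_smul, hinv, Module.reflection_apply,
    ← coxeterForm_geometricRep cs w (simpleRoot i), hinv]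

lemma coxeterForm_simpleRoot_mem_subring {A : Subring ℝ}
    (hA : ∀ i j, coxeterForm M (simpleRoot i) (simpleRoot j) ∈ A) (w : W) (i k : B) :
    coxeterForm M (simpleRoot k) (geometricRep cs w (simpleRoot i)) ∈ A := by
  induction w using cs.simple_induction_left generalizing k with
  | one => simpa using hA k i
  | mul_simple_left w j ih =>
    rw [map_mul, LinearEquiv.mul_apply, geometricRep_simple, simpleReflection_apply, map_sub,
      map_smul, smul_eq_mul]
    exact sub_mem (ih k) (mul_mem (ih j) (hA k j))

/-- The root system of a Coxeter group: the orbits of the simple roots in the geometric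
representation. -/
def coxeterRoots : Set (B →₀ ℝ) := {α | ∃ w i, geometricRep cs w (simpleRoot i) = α}

lemma finite_of_finite_coxeterRoots [Finite B] (h : (coxeterRoots cs).Finite) : Finite W := by
  have := h.to_subtype
  let act (w : W) (i : B) : coxeterRoots cs := ⟨geometricRep cs w (simpleRoot i), w, i, rfl⟩
  refine Finite.of_injective act fun w u hwu => geometricRep_injective cs ?_
  apply LinearEquiv.toLinearMap_injective
  ext1 i
  ext1
  exact congrArg Subtype.val (congrFun hwu i)

lemma exists_finiteDimensional_coxeterForm_mem [Finite B] (M : CoxeterMatrix B) :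
    ∃ K : IntermediateField ℚ ℝ, FiniteDimensional ℚ K ∧
      ∀ i j, coxeterForm M (simpleRoot i) (simpleRoot j) ∈ K := by
  let entries : Set ℝ :=
    Set.range fun p : B × B => coxeterForm M (simpleRoot p.1) (simpleRoot p.2)
  have hintegral : ∀ x ∈ entries, IsIntegral ℚ x := by
    rintro _ ⟨⟨i, j⟩, rfl⟩
    have hform : coxeterForm M (simpleRoot i) (simpleRoot j) =
        -(2 * cos ((1 / M i j : ℚ) * π)) := by
      rw [coxeterForm_simpleRoot]
      push_cast
      ring_nf
    simpa only [hform] using (isIntegral_two_mul_cos_rat_mul_pi (1 / M i j)).neg.tower_top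
  have : Finite entries := Set.finite_range _
  exact ⟨IntermediateField.adjoin ℚ entries, IntermediateField.finiteDimensional_adjoin hintegral,
    fun i j => IntermediateField.subset_adjoin ℚ entries ⟨(i, j), rfl⟩⟩

lemma isOfFinOrder_root_reflection_mul_root_reflection
    (hfin : ∀ t t' : W, cs.IsReflection t → cs.IsReflection t' → IsOfFinOrder (t * t'))
    (w u : W) (i j : B) :
    IsOfFinOrder (Module.reflection (coxeterForm_geometricRep_simpleRoot_self cs w i) *
      Module.reflection (coxeterForm_geometricRep_simpleRoot_self cs u j)) := by
  rw [← geometricRep_conj_simple, ← geometricRep_conj_simple, ← map_mul]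
  exact (geometricRep cs).isOfFinOrder (hfin _ _ ⟨w, i, rfl⟩ ⟨u, j, rfl⟩)

lemma eq_of_coxeterForm_eq_two
    (hfin : ∀ t t' : W, cs.IsReflection t → cs.IsReflection t' → IsOfFinOrder (t * t'))
    {α β : B →₀ ℝ} (hα : α ∈ coxeterRoots cs) (hβ : β ∈ coxeterRoots cs)
    (h : coxeterForm M α β = 2) : α = β := by
  obtain ⟨w, i, rfl⟩ := hα
  obtain ⟨u, j, rfl⟩ := hβ
  exact eq_of_isOfFinOrder_reflection_mul_reflection _ _ h
    (by rwa [(coxeterForm_isSymm M).eq])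
    (isOfFinOrder_root_reflection_mul_root_reflection cs hfin w u i j)

lemma exists_eval_C_neg_coxeterForm_eq_two
    (hfin : ∀ t t' : W, cs.IsReflection t → cs.IsReflection t' → IsOfFinOrder (t * t'))
    {α β : B →₀ ℝ} (hα : α ∈ coxeterRoots cs) (hβ : β ∈ coxeterRoots cs) :
    ∃ n : ℤ, n ≠ 0 ∧ (C ℝ n).eval (-coxeterForm M α β) = 2 := by
  obtain ⟨w, i, rfl⟩ := hα
  obtain ⟨u, j, rfl⟩ := hβ
  obtain ⟨n, hn, hpow⟩ := isOfFinOrder_iff_pow_eq_one.mp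
    (isOfFinOrder_root_reflection_mul_root_reflection cs hfin w u i j)
  exact ⟨2 * n, by lia, eval_C_eq_two_of_reflection_mul_reflection_pow_eq_one _ _
    (neg_neg _).symm (by rw [neg_neg, (coxeterForm_isSymm M).eq]) hpow⟩

lemma finite_setOf_coxeterForm_simpleRoot_coxeterRoots [Finite B]
    (hfin : ∀ t t' : W, cs.IsReflection t → cs.IsReflection t' → IsOfFinOrder (t * t')) :
    {x | ∃ k, ∃ α ∈ coxeterRoots cs, coxeterForm M (simpleRoot k) α = x}.Finite := by
  obtain ⟨K, hK, hentries⟩ := exists_finiteDimensional_coxeterForm_mem M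
  have : NumberField K := { to_charZero := inferInstance, to_finiteDimensional := hK }
  refine ((finite_setOf_eval_C_eq_two K).image fun x : K => -(x : ℝ)).subset ?_
  rintro _ ⟨k, _, ⟨w, i, rfl⟩, rfl⟩
  have hmem := coxeterForm_simpleRoot_mem_subring cs (A := K.toSubring) hentries w i k
  obtain ⟨n, hn, hC⟩ := exists_eval_C_neg_coxeterForm_eq_two cs hfin
    (α := simpleRoot k) ⟨1, k, by simp⟩ ⟨w, i, rfl⟩
  refine ⟨-⟨_, hmem⟩, ⟨n, hn, ?_⟩, by simp⟩
  apply (algebraMap K ℝ).injective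
  rw [← Polynomial.eval_map_apply, map_C, map_ofNat]
  exact hC

lemma finite_coxeterRoots [Finite B]
    (hfin : ∀ t t' : W, cs.IsReflection t → cs.IsReflection t' → IsOfFinOrder (t * t')) :
    (coxeterRoots cs).Finite := by
  let values := {x | ∃ k, ∃ α ∈ coxeterRoots cs, coxeterForm M (simpleRoot k) α = x}
  have : Finite values := finite_setOf_coxeterForm_simpleRoot_coxeterRoots cs hfin
  let pairings (α : coxeterRoots cs) (k : B) : values :=
    ⟨coxeterForm M (simpleRoot k) α, k, α, α.2, rfl⟩
  refine Set.finite_coe_iff.mp (Finite.of_injective pairings ?_)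
  rintro ⟨α, hα⟩ ⟨β, hβ⟩ hαβ
  have hpair : coxeterForm M α α = coxeterForm M α β :=
    coxeterForm_congr_right M (fun k => congrArg Subtype.val (congrFun hαβ k)) α
  have hself : coxeterForm M α α = 2 := by
    obtain ⟨w, i, rfl⟩ := hα
    exact coxeterForm_geometricRep_simpleRoot_self cs w i
  exact Subtype.ext (eq_of_coxeterForm_eq_two cs hfin hα hβ (hpair ▸ hself))

end GeometricRepresentation

/-- Let `(W,S)` be a Coxeter system with `S` finite.  If every subgroup of `W`
generated by two reflections is finite, then `W` is finite. -/
theorem statement19 {B W : Type*} [Finite B] [Group W]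
    {M : CoxeterMatrix B} (cs : CoxeterSystem M W)
    (h : ∀ t t' : W, cs.IsReflection t → cs.IsReflection t' →
      ((Subgroup.closure {t, t'} : Subgroup W) : Set W).Finite) :
    Finite W := by
  have hfin (t t' : W) (ht : cs.IsReflection t) (ht' : cs.IsReflection t') :
      IsOfFinOrder (t * t') := isOfFinOrder_mul_of_finite_closure_pair (h t t' ht ht')
  exact finite_of_finite_coxeterRoots cs (finite_coxeterRoots cs hfin)
end
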